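/- arXiv:math/0309316 — 3 statements merged into one kernel-verified Lean document; each statement's English description precedes it below -/
import Mathlib

section
/- For fixed integers n, d, m, k, the set of polynomials f in n complex variables with deg f = d, isolated affine singularities, total Milnor number μ(f) = m and #B_aff(f) = k is a constructible subset of the coefficient space ℂ^N of polynomials of degree at most d. -/
/- Common definitions: singularity-theoretic invariants of complex polynomials,
following Bodin–Tibăr, "Topological equivalence of complex polynomials". -/

open MvPolynomial Set

noncomputable section

namespace PolyTop

variable {n : ℕ}

/-- The affine singular locus of a polynomial. -/
def AffSing (f : MvPolynomial (Fin n) ℂ) : Set (Fin n → ℂ) :=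
  {x | ∀ i, eval x (pderiv i f) = 0}

/-- The Jacobian ideal of `f`, translated so that `p` becomes the origin, inside the
ring of formal power series. -/
def jacIdeal (f : MvPolynomial (Fin n) ℂ) (p : Fin n → ℂ) :
    Ideal (MvPowerSeries (Fin n) ℂ) :=
  Ideal.span (Set.range fun i : Fin n =>
    (MvPolynomial.coeToMvPowerSeries.ringHom
      ((aeval fun j : Fin n => (X j + C (p j) : MvPolynomial (Fin n) ℂ)) (pderiv i f))))

/-- The local Milnor number of `f` at `p`: the `ℂ`-dimension of the quotient of the ring
of formal power series centred at `p` by the ideal of the partial derivatives of `f`. -/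
def muLoc (f : MvPolynomial (Fin n) ℂ) (p : Fin n → ℂ) : ℕ :=
  Module.finrank ℂ (MvPowerSeries (Fin n) ℂ ⧸ jacIdeal f p)

/-- The total Milnor number `μ(f)`. -/
def mu (f : MvPolynomial (Fin n) ℂ) : ℕ :=
  ∑ᶠ p ∈ AffSing f, muLoc f p

/-- The sum `μ_t(f)` of the local Milnor numbers in the fibre `f⁻¹(t)`. -/
def muFib (f : MvPolynomial (Fin n) ℂ) (t : ℂ) : ℕ :=
  ∑ᶠ p ∈ AffSing f ∩ {x | eval x f = t}, muLoc f p

/-- The set of affine critical values. -/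
def Baff (f : MvPolynomial (Fin n) ℂ) : Set ℂ :=
  (fun x => eval x f) '' AffSing f

/-- Projective space `ℙ^{k-1}`. -/
abbrev Proj (k : ℕ) := Projectivization ℂ (Fin k → ℂ)

/-- A chosen index at which the (chosen) representative of a point of projective
space does not vanish. -/
def pivot {k : ℕ} (P : Proj k) : Fin k :=
  (Function.ne_iff.mp P.rep_nonzero).choose

/-- The set `W(f) ⊂ ℙ^{n-1}` of singular directions of the top-degree part of `f`;
`f` has isolated singularities at infinity when `W(f)` is finite. -/
def Wset (f : MvPolynomial (Fin n) ℂ) : Set (Proj n) :=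
  {P | ∀ i, eval P.rep (pderiv i (homogeneousComponent f.totalDegree f)) = 0}

/-- The set `Σ(f) ⊂ W(f)`. -/
def SigmaSet (f : MvPolynomial (Fin n) ℂ) : Set (Proj n) :=
  {P | P ∈ Wset f ∧ eval P.rep (homogeneousComponent (f.totalDegree - 1) f) = 0}

/-- The homogenisation `P̃(x,x₀)` of `f`, with `x₀` as variable `0` and `xᵢ` as
variable `i.succ`. -/
def homog (f : MvPolynomial (Fin n) ℂ) : MvPolynomial (Fin (n + 1)) ℂ :=
  ∑ k ∈ Finset.range (f.totalDegree + 1),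
    X 0 ^ (f.totalDegree - k) * rename Fin.succ (homogeneousComponent k f)

/-- The defining polynomial `P̃ - t x₀ ^ d` of the projective closure `X_t` of `f⁻¹(t)`. -/
def XtPoly (f : MvPolynomial (Fin n) ℂ) (t : ℂ) : MvPolynomial (Fin (n + 1)) ℂ :=
  homog f - C t * X 0 ^ f.totalDegree

/-- The local defining equation of a projective hypersurface `{F = 0}` in the affine
chart `{x_j = 1}`. -/
def chartPoly {k : ℕ} (j : Fin (k + 1)) (F : MvPolynomial (Fin (k + 1)) ℂ) :
    MvPolynomial (Fin k) ℂ :=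
  aeval (j.insertNth 1 X) F

/-- The coordinates, in the affine chart `{x_j = 1}`, of the projective point with
homogeneous coordinates `v`. -/
def chartPoint {k : ℕ} (j : Fin (k + 1)) (v : Fin (k + 1) → ℂ) : Fin k → ℂ :=
  fun i => v (j.succAbove i) / v j

/-- The local Milnor number `μ_p(X_t)` of the projective closure of `f⁻¹(t)` at the
point `[p:0]` at infinity, computed in an affine chart containing the point. -/
def muAtInf (f : MvPolynomial (Fin n) ℂ) (P : Proj n) (t : ℂ) : ℕ :=
  muLoc (chartPoly (pivot P).succ (XtPoly f t))
    (chartPoint (pivot P).succ (Fin.cons 0 P.rep))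

/-- The generic local Milnor number `μ_{p,gen}(f)`: the value of `μ_p(X_t)` attained for
all but finitely many `t`. -/
def muGenInf (f : MvPolynomial (Fin n) ℂ) (P : Proj n) : ℕ :=
  sInf {m | {t : ℂ | muAtInf f P t ≠ m}.Finite}

/-- The Milnor–Lê number `λ_{p,t}(f)`. -/
def lambdaPT (f : MvPolynomial (Fin n) ℂ) (P : Proj n) (t : ℂ) : ℕ :=
  muAtInf f P t - muGenInf f P

/-- `λ_t(f)`. -/
def lambdaT (f : MvPolynomial (Fin n) ℂ) (t : ℂ) : ℕ :=
  ∑ᶠ P ∈ SigmaSet f, lambdaPT f P t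

/-- The Milnor–Lê number at infinity `λ(f)`. -/
def lambdaTot (f : MvPolynomial (Fin n) ℂ) : ℕ :=
  ∑ᶠ t : ℂ, lambdaT f t

/-- The set of critical values at infinity. -/
def Binf (f : MvPolynomial (Fin n) ℂ) : Set ℂ :=
  {t | 0 < lambdaT f t}

/-- The bifurcation set `B(f)`. -/
def Bset (f : MvPolynomial (Fin n) ℂ) : Set ℂ :=
  Baff f ∪ Binf f

/-- Topological equivalence of two polynomial functions `ℂⁿ → ℂ`. -/
def TopEquiv (f g : MvPolynomial (Fin n) ℂ) : Prop :=
  ∃ (Φ : (Fin n → ℂ) ≃ₜ (Fin n → ℂ)) (Ψ : ℂ ≃ₜ ℂ),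
    ∀ x, Ψ (eval x f) = eval (Φ x) g

/-- A FISI family of degree `d` on `[0,1]`: the coefficients are polynomial functions of
the parameter, the degree is constantly `d`, and each member has isolated affine
singularities and isolated singularities at infinity. -/
structure FISIFamily (n d : ℕ) (F : ℝ → MvPolynomial (Fin n) ℂ) : Prop where
  polyCoeff : ∀ m : Fin n →₀ ℕ, ∃ q : Polynomial ℂ,
    ∀ s ∈ Icc (0:ℝ) 1, coeff m (F s) = q.eval (s : ℂ)
  degEq : ∀ s ∈ Icc (0:ℝ) 1, (F s).totalDegree = d
  isolAff : ∀ s ∈ Icc (0:ℝ) 1, (AffSing (F s)).Finite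
  isolInf : ∀ s ∈ Icc (0:ℝ) 1, (Wset (F s)).Finite

/-- A canonical distance between two points of projective space: the Hausdorff distance
between their sets of unit-norm representatives. -/
def projDist {k : ℕ} (P Q : Proj k) : ℝ :=
  Metric.hausdorffDist {v : Fin k → ℂ | ∃ c : ℂ, v = c • P.rep ∧ ‖v‖ = 1}
    {v : Fin k → ℂ | ∃ c : ℂ, v = c • Q.rep ∧ ‖v‖ = 1}

/-- Continuity (w.r.t. the distance `projDist`) of a family of points of projective
space, on a set of parameters. -/
def ProjContinuousOn {k : ℕ} (p : ℝ → Proj k) (Ssub : Set ℝ) : Prop :=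
  ∀ s₀ ∈ Ssub, ∀ ε > 0, ∃ δ > 0, ∀ s ∈ Ssub, |s - s₀| < δ → projDist (p s) (p s₀) < ε

/-- A Zariski-closed subset of the affine space `ℂ^σ`: the common zero set of a family of
polynomials. -/
def ZClosed {σ : Type*} (S : Set (σ → ℂ)) : Prop :=
  ∃ I : Set (MvPolynomial σ ℂ), S = {x | ∀ g ∈ I, eval x g = 0}

/-- A constructible subset of affine space: a finite union of sets, each the intersection
of a Zariski-open and a Zariski-closed subset. -/
def IsConstructibleC {σ : Type*} (S : Set (σ → ℂ)) : Prop :=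
  ∃ (k : ℕ) (U Z : Fin k → Set (σ → ℂ)),
    (∀ i, ZClosed (U i)ᶜ) ∧ (∀ i, ZClosed (Z i)) ∧ S = ⋃ i, U i ∩ Z i

/-- Index type for the coefficients of a polynomial of degree at most `d` in `n`
variables: exponent vectors of total degree at most `d` (a finite type). -/
abbrev CoeffIdx (n d : ℕ) := {e : Fin n → ℕ // ∑ i, e i ≤ d}

instance (n d : ℕ) : Fintype (CoeffIdx n d) :=
  Set.Finite.fintype (s := {e : Fin n → ℕ | ∑ i, e i ≤ d})
    (Set.Finite.subset (Set.Finite.pi fun _ : Fin n => Set.finite_Iic d)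
      (fun e he => Set.mem_pi.mpr fun i _ =>
        le_trans (Finset.single_le_sum (f := e) (fun _ _ => Nat.zero_le _)
          (Finset.mem_univ i)) he))

/-- The polynomial with coefficient vector `c`, where the coefficient space
`ℂ^N = ℂ^(CoeffIdx n d)` parametrises the polynomials of degree at most `d`. -/
def toPoly {n d : ℕ} (c : CoeffIdx n d → ℂ) : MvPolynomial (Fin n) ℂ :=
  ∑ e : CoeffIdx n d, c e • monomial (Finsupp.equivFunOnFinite.symm e.1) (1 : ℂ)

/-- The real-coordinate presentation of a point of `ℂ^k × ℝ`, used to speak of real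
algebraic subvarieties of `ℂ^k × [0,1]`. -/
def reCoords {k : ℕ} (v : Fin k → ℂ) (s : ℝ) : (Fin k × Fin 2) ⊕ Unit → ℝ :=
  Sum.elim (fun q => if q.2 = 0 then (v q.1).re else (v q.1).im) (fun _ => s)

/-- An algebraic braid of finite subsets of `ℂ^k` over the parameter interval `[0,u]`:
the total space is a real algebraic subvariety of `ℂ^k × [0,u]`, the multivalued map is
continuous for the Hausdorff distance, and the cardinality is constant. -/
def IsAlgebraicBraid {k : ℕ} (u : ℝ) (Ω : ℝ → Set (Fin k → ℂ)) : Prop :=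
  (∀ s ∈ Icc (0:ℝ) u, (Ω s).Finite) ∧
  (∃ (m : ℕ) (q : Fin m → MvPolynomial ((Fin k × Fin 2) ⊕ Unit) ℝ),
    ∀ v : Fin k → ℂ, ∀ s ∈ Icc (0:ℝ) u,
      (v ∈ Ω s ↔ ∀ i, eval (reCoords v s) (q i) = 0)) ∧
  (∀ s₀ ∈ Icc (0:ℝ) u, ∀ ε > 0, ∃ δ > 0, ∀ s ∈ Icc (0:ℝ) u, |s - s₀| < δ →
    Metric.hausdorffDist (Ω s) (Ω s₀) < ε) ∧
  (∀ s ∈ Icc (0:ℝ) u, (Ω s).ncard = (Ω 0).ncard)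

/-- An algebraic braid of finite subsets of `ℂ` over `[0,u]`. -/
def IsAlgebraicBraidC (u : ℝ) (Ω : ℝ → Set ℂ) : Prop :=
  (∀ s ∈ Icc (0:ℝ) u, (Ω s).Finite) ∧
  (∃ (m : ℕ) (q : Fin m → MvPolynomial (Fin 3) ℝ),
    ∀ x : ℂ, ∀ s ∈ Icc (0:ℝ) u,
      (x ∈ Ω s ↔ ∀ i, eval ![x.re, x.im, s] (q i) = 0)) ∧
  (∀ s₀ ∈ Icc (0:ℝ) u, ∀ ε > 0, ∃ δ > 0, ∀ s ∈ Icc (0:ℝ) u, |s - s₀| < δ →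
    Metric.hausdorffDist (Ω s) (Ω s₀) < ε) ∧
  (∀ s ∈ Icc (0:ℝ) u, (Ω s).ncard = (Ω 0).ncard)

/-- The affine cone (including the origin) over a subset of projective space. -/
def coneOf {k : ℕ} (A : Set (Proj k)) : Set (Fin k → ℂ) :=
  {0} ∪ {v | ∃ h : v ≠ 0, Projectivization.mk ℂ v h ∈ A}

/-- An algebraic braid of finite subsets of projective space `ℙ^{k-1}` over `[0,u]`:
the affine cone of the total space is a real algebraic subvariety of `ℂ^k × [0,u]`,
the multivalued map is continuous for the Hausdorff distance (w.r.t. `projDist`),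
and the cardinality is constant. -/
def IsAlgebraicBraidProj {k : ℕ} (u : ℝ) (A : ℝ → Set (Proj k)) : Prop :=
  (∀ s ∈ Icc (0:ℝ) u, (A s).Finite) ∧
  (∃ (m : ℕ) (q : Fin m → MvPolynomial ((Fin k × Fin 2) ⊕ Unit) ℝ),
    ∀ v : Fin k → ℂ, ∀ s ∈ Icc (0:ℝ) u,
      (v ∈ coneOf (A s) ↔ ∀ i, eval (reCoords v s) (q i) = 0)) ∧
  (∀ s₀ ∈ Icc (0:ℝ) u, ∀ ε > 0, ∃ δ > 0, ∀ s ∈ Icc (0:ℝ) u, |s - s₀| < δ →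
    (∀ P ∈ A s, ∃ Q ∈ A s₀, projDist P Q < ε) ∧
    (∀ Q ∈ A s₀, ∃ P ∈ A s, projDist P Q < ε)) ∧
  (∀ s ∈ Icc (0:ℝ) u, (A s).ncard = (A 0).ncard)

/-- The singular locus of the projective hypersurface `{F = 0} ⊂ ℙ^m`: the points where,
in an affine chart containing the point, the local defining equation and all its partial
derivatives vanish. -/
def SingProjHyp {m : ℕ} (F : MvPolynomial (Fin (m + 1)) ℂ) : Set (Proj (m + 1)) :=
  {P | eval (chartPoint (pivot P) P.rep) (chartPoly (pivot P) F) = 0 ∧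
    ∀ i, eval (chartPoint (pivot P) P.rep) (pderiv i (chartPoly (pivot P) F)) = 0}

/-- The embedding `ℙ^{n-1} ≅ H^∞ ⊂ ℙ^n`, `[p] ↦ [p:0]` (the hyperplane at infinity
being `{x₀ = 0}`, the variable `x₀` having index `0`). -/
def projEmbInf (P : Proj n) : Proj (n + 1) :=
  Projectivization.mk ℂ (Fin.cons 0 P.rep)
    (by
      intro h
      apply P.rep_nonzero
      funext i
      have h' := congrFun h i.succ
      simpa using h')

/-- The local defining equation of `X = {P̃ - t x₀^d = 0} ⊂ ℙ^n × ℂ` in the affine chart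
`{x_j = 1}` of `ℙ^n`: a polynomial in the `n` chart coordinates (indices `i.castSucc`)
and in `t` (index `Fin.last n`). -/
def XXchartEq (f : MvPolynomial (Fin n) ℂ) (j : Fin (n + 1)) :
    MvPolynomial (Fin (n + 1)) ℂ :=
  rename Fin.castSucc (chartPoly j (homog f)) -
    X (Fin.last n) * rename Fin.castSucc (chartPoly j (X 0 ^ f.totalDegree))

/-- The singular locus of the hypersurface `X = {P̃ - t x₀^d = 0} ⊂ ℙ^n × ℂ`: the points
where, in an affine chart, the defining equation and all its partial derivatives (with
respect to the chart coordinates and to `t`) vanish. -/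
def SingXX (f : MvPolynomial (Fin n) ℂ) : Set (Proj (n + 1) × ℂ) :=
  {z | eval (Fin.snoc (chartPoint (pivot z.1) z.1.rep) z.2) (XXchartEq f (pivot z.1)) = 0 ∧
    ∀ i, eval (Fin.snoc (chartPoint (pivot z.1) z.1.rep) z.2)
      (pderiv i (XXchartEq f (pivot z.1))) = 0}

/-- The affine chart of `ℙ^n` used around a point `[p:0]` at infinity: the chart
`{x_j = 1}` where `j` is (the index in `Fin (n+1)` of) a nonvanishing coordinate
of `p`. -/
def chartIdx (p : Proj n) : Fin (n + 1) := (pivot p).succ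

/-- In the chart around `[p:0]`, the defining equation of `X(s) ⊂ ℙ^n × ℂ`, as a
polynomial in the `n` chart coordinates (indices `i.castSucc`) and `t`
(index `Fin.last n`). -/
def tubeEq (F : ℝ → MvPolynomial (Fin n) ℂ) (p : Proj n) (s : ℝ) :
    MvPolynomial (Fin (n + 1)) ℂ :=
  XXchartEq (F s) (chartIdx p)

/-- The chart coordinates of the point `([p:0], c) ∈ ℙ^n × ℂ`. -/
def tubeCtr (p : Proj n) (c : ℂ) : Fin (n + 1) → ℂ :=
  Fin.snoc (chartPoint (chartIdx p) (Fin.cons 0 p.rep)) c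

/-- Squared euclidean distance to `w` in the chart. -/
def sqDist (w z : Fin (n + 1) → ℂ) : ℝ := ∑ i, Complex.normSq (z i - w i)

/-- The tube `T_s = B_ε ∩ X(s) ∩ g_s⁻¹(D_η(c))`, in the chart around `([p:0],c)`. -/
def Ttube (F : ℝ → MvPolynomial (Fin n) ℂ) (p : Proj n) (c : ℂ) (ε η : ℝ) (s : ℝ) :
    Set (Fin (n + 1) → ℂ) :=
  {z | eval z (tubeEq F p s) = 0 ∧ sqDist (tubeCtr p c) z ≤ ε ^ 2 ∧
    dist (z (Fin.last n)) c ≤ η}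

/-- The tube `T_s` as a topological space. -/
abbrev Tsub (F : ℝ → MvPolynomial (Fin n) ℂ) (p : Proj n) (c : ℂ) (ε η : ℝ) (s : ℝ) :
    Type :=
  {z : Fin (n + 1) → ℂ // z ∈ Ttube F p c ε η s}

/-- Membership in the middle stratum `{p} × D_η(c)` of a tube: the chart coordinates of
the point of `ℙ^n` agree with those of `[p:0]`. -/
def OnAxis (p : Proj n) (c : ℂ) (z : Fin (n + 1) → ℂ) : Prop :=
  ∀ i : Fin n, z i.castSucc = tubeCtr p c i.castSucc

/-- `T_0` is a Milnor tube: for every `t ∈ D_η(c)`, the fibre `g_0⁻¹(t)` meets the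
sphere `S_ε = ∂B_ε` transversally (the level-set equations of the fibre together with
the derivative of the squared-distance function form a surjective real-linear map). -/
def MilnorTube (F : ℝ → MvPolynomial (Fin n) ℂ) (p : Proj n) (c : ℂ) (ε η : ℝ) : Prop :=
  ∀ t ∈ Metric.closedBall c η, ∀ z : Fin (n + 1) → ℂ,
    eval z (tubeEq F p 0) = 0 → z (Fin.last n) = t →
    sqDist (tubeCtr p c) z = ε ^ 2 →
    Function.Surjective (fun v : Fin (n + 1) → ℂ =>
      ((fderiv ℝ (fun w => eval w (tubeEq F p 0)) z v, v (Fin.last n)),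
        fderiv ℝ (fun w => sqDist (tubeCtr p c) w) z v))

/-- A topological space is locally contractible if every point has arbitrarily small
neighbourhoods which contract to a point inside any given neighbourhood. -/
def LocallyContr (Xs : Type*) [TopologicalSpace Xs] : Prop :=
  ∀ x : Xs, ∀ U ∈ nhds x, ∃ V ∈ nhds x, V ⊆ U ∧
    ∃ H : ℝ × Xs → Xs, ContinuousOn H (Icc (0:ℝ) 1 ×ˢ V) ∧
      (∀ v ∈ V, H (0, v) = v) ∧ (∃ y, ∀ v ∈ V, H (1, v) = y) ∧
      (∀ t ∈ Icc (0:ℝ) 1, ∀ v ∈ V, H (t, v) ∈ U)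

end PolyTop

namespace PolyTop

/-! ### Constructible predicates -/

/-- Constructible predicates on affine space, via the prime spectrum. -/
def Cons {σ : Type} (P : (σ → ℂ) → Prop) : Prop :=
  ∃ T : Set (PrimeSpectrum (MvPolynomial σ ℂ)), Topology.IsConstructible T ∧
    ∀ x, P x ↔ (pointToPoint (k := ℂ) x) ∈ T

/-- Polynomial functions on affine space. -/
def PolyFun {σ : Type} (g : (σ → ℂ) → ℂ) : Prop :=
  ∃ q : MvPolynomial σ ℂ, ∀ x, g x = eval x q

section basic
variable {σ : Type} {P Q : (σ → ℂ) → Prop}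

theorem Cons.congr (hP : Cons P) (h : ∀ x, Q x ↔ P x) : Cons Q := by
  obtain ⟨T, hT, hx⟩ := hP
  exact ⟨T, hT, fun x => (h x).trans (hx x)⟩

theorem Cons.not (hP : Cons P) : Cons (fun x => ¬ P x) := by
  obtain ⟨T, hT, hx⟩ := hP
  exact ⟨Tᶜ, hT.compl, fun x => by simp [hx]⟩

theorem Cons.and (hP : Cons P) (hQ : Cons Q) : Cons (fun x => P x ∧ Q x) := by
  obtain ⟨T, hT, hx⟩ := hP
  obtain ⟨T', hT', hx'⟩ := hQ
  exact ⟨T ∩ T', hT.inter hT', fun x => by simp [hx, hx']⟩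

theorem Cons.or (hP : Cons P) (hQ : Cons Q) : Cons (fun x => P x ∨ Q x) := by
  obtain ⟨T, hT, hx⟩ := hP
  obtain ⟨T', hT', hx'⟩ := hQ
  exact ⟨T ∪ T', hT.union hT', fun x => by simp [hx, hx']⟩

theorem Cons.imp (hP : Cons P) (hQ : Cons Q) : Cons (fun x => P x → Q x) :=
  (hP.not.or hQ).congr fun x => by tauto

theorem Cons.iff (hP : Cons P) (hQ : Cons Q) : Cons (fun x => P x ↔ Q x) :=
  ((hP.imp hQ).and (hQ.imp hP)).congr fun x => by tauto

theorem Cons.const (p : Prop) : Cons (fun _ : σ → ℂ => p) := by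
  by_cases h : p
  · exact ⟨univ, .univ, fun x => by simp [h]⟩
  · exact ⟨∅, .empty, fun x => by simp [h]⟩

theorem Cons.finEx {ι : Type*} [Finite ι] {P : ι → (σ → ℂ) → Prop} (h : ∀ i, Cons (P i)) :
    Cons (fun x => ∃ i, P i x) := by
  choose T hT hx using h
  exact ⟨⋃ i, T i, .iUnion hT, fun x => by simp [hx]⟩

theorem Cons.finAll {ι : Type*} [Finite ι] {P : ι → (σ → ℂ) → Prop} (h : ∀ i, Cons (P i)) :
    Cons (fun x => ∀ i, P i x) := by
  choose T hT hx using h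
  exact ⟨⋂ i, T i, .iInter hT, fun x => by simp [hx]⟩

theorem mem_pointToPoint (x : σ → ℂ) (q : MvPolynomial σ ℂ) :
    q ∈ (pointToPoint (k := ℂ) x).asIdeal ↔ eval x q = 0 := by
  change q ∈ (vanishingIdeal ℂ {x} : Ideal (MvPolynomial σ ℂ)) ↔ _
  rw [mem_vanishingIdeal_singleton_iff]
  rfl

theorem Cons.eqZero {g : (σ → ℂ) → ℂ} (hg : PolyFun g) : Cons (fun x => g x = 0) := by
  obtain ⟨q, hq⟩ := hg
  refine ⟨PrimeSpectrum.zeroLocus {q}, ?_, fun x => ?_⟩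
  · rw [← Topology.isConstructible_compl]
    exact (PrimeSpectrum.isRetrocompact_zeroLocus_compl (Set.finite_singleton q)).isConstructible
      (PrimeSpectrum.isClosed_zeroLocus _).isOpen_compl
  · rw [PrimeSpectrum.mem_zeroLocus, Set.singleton_subset_iff, SetLike.mem_coe, mem_pointToPoint]
    exact iff_of_eq (congrArg (· = 0) (hq x))

theorem Cons.isConstructibleC (hP : Cons P) : IsConstructibleC {x | P x} := by
  obtain ⟨T, hT, hx⟩ := hP
  obtain ⟨S, rfl⟩ := PrimeSpectrum.exists_constructibleSetData_iff.mpr hT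
  refine ⟨S.card, fun i => {x | eval x (S.equivFin.symm i).1.f ≠ 0},
    fun i => {x | ∀ q ∈ Set.range (S.equivFin.symm i).1.g, eval x q = 0}, fun i => ?_, fun i => ?_,
      ?_⟩
  · exact ⟨{(S.equivFin.symm i).1.f}, by ext; simp⟩
  · exact ⟨Set.range (S.equivFin.symm i).1.g, rfl⟩
  · ext x
    rw [Set.mem_ofPred_eq, hx, PrimeSpectrum.ConstructibleSetData.toSet, Set.mem_iUnion]
    have key : ∀ D : PrimeSpectrum.BasicConstructibleSetData (MvPolynomial σ ℂ),
        pointToPoint (k := ℂ) x ∈ D.toSet ↔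
          (eval x D.f ≠ 0 ∧ ∀ q ∈ Set.range D.g, eval x q = 0) := by
      intro D
      rw [PrimeSpectrum.BasicConstructibleSetData.toSet, Set.mem_sdiff,
        PrimeSpectrum.mem_zeroLocus, PrimeSpectrum.mem_zeroLocus, Set.singleton_subset_iff,
        SetLike.mem_coe, mem_pointToPoint, and_comm]
      refine and_congr Iff.rfl ⟨fun h q hq => (mem_pointToPoint x q).1 (h hq),
        fun h q hq => (mem_pointToPoint x q).2 (h q hq)⟩
    rw [Set.mem_iUnion]
    constructor
    · rintro ⟨D, h⟩
      rw [Set.mem_iUnion] at h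
      obtain ⟨hD, h⟩ := h
      refine ⟨S.equivFin ⟨D, hD⟩, ?_⟩
      have e : (S.equivFin.symm (S.equivFin ⟨D, hD⟩)).1 = D := by simp
      exact (key _).1 (by rw [e]; exact h)
    · rintro ⟨i, h⟩
      refine ⟨(S.equivFin.symm i).1, ?_⟩
      rw [Set.mem_iUnion]
      exact ⟨(S.equivFin.symm i).2, (key _).2 h⟩

theorem Cons.exists {τ : Type} [Finite σ] [Finite τ] {P : (σ → ℂ) → (τ → ℂ) → Prop}
    (h : Cons (fun z : σ ⊕ τ → ℂ => P (fun i => z (.inl i)) (fun i => z (.inr i)))) :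
    Cons (fun x => ∃ y, P x y) := by
  obtain ⟨T, hT, hx⟩ := h
  let φ : MvPolynomial σ ℂ →+* MvPolynomial (σ ⊕ τ) ℂ := (rename Sum.inl : _ →ₐ[ℂ] _).toRingHom
  have hφ : φ.FinitePresentation := by
    rw [← RingHom.FinitePresentation.of_finiteType]
    refine RingHom.FiniteType.of_comp_finiteType (f := (C : ℂ →+* MvPolynomial σ ℂ)) ?_
    have : φ.comp C = (C : ℂ →+* MvPolynomial (σ ⊕ τ) ℂ) := by
      ext a; simp [φ]
    rw [this]
    change (algebraMap ℂ (MvPolynomial (σ ⊕ τ) ℂ)).FiniteType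
    rw [RingHom.finiteType_algebraMap]
    infer_instance
  have hpt : ∀ z : σ ⊕ τ → ℂ, PrimeSpectrum.comap φ (pointToPoint (k := ℂ) z) =
      pointToPoint (k := ℂ) (fun i => z (.inl i)) := by
    intro z
    ext q
    rw [PrimeSpectrum.comap_asIdeal, Ideal.mem_comap, mem_pointToPoint, mem_pointToPoint]
    simp only [φ, AlgHom.toRingHom_eq_coe, RingHom.coe_coe, eval_rename]
    rfl
  refine ⟨PrimeSpectrum.comap φ '' T, PrimeSpectrum.isConstructible_comap_image hφ hT,
    fun x => ⟨?_, ?_⟩⟩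
  · rintro ⟨y, hy⟩
    refine ⟨pointToPoint (k := ℂ) (Sum.elim x y), (hx _).1 hy, ?_⟩
    rw [hpt]; rfl
  · rintro ⟨w, hw, hwx⟩
    obtain ⟨S, rfl⟩ := PrimeSpectrum.exists_constructibleSetData_iff.mpr hT
    rw [PrimeSpectrum.ConstructibleSetData.toSet, Set.mem_iUnion₂] at hw
    obtain ⟨D, hD, hw⟩ := hw
    have hcl : IsClosed ({pointToPoint (k := ℂ) x} : Set (PrimeSpectrum (MvPolynomial σ ℂ))) := by
      rw [PrimeSpectrum.isClosed_singleton_iff_isMaximal]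
      exact isMaximal_iff_eq_vanishingIdeal_singleton.2 ⟨x, rfl⟩
    have hlc : IsLocallyClosed (D.toSet ∩ PrimeSpectrum.comap φ ⁻¹' {pointToPoint (k := ℂ) x}) := by
      refine IsLocallyClosed.inter ?_ ?_
      · rw [PrimeSpectrum.BasicConstructibleSetData.toSet, Set.sdiff_eq]
        exact (PrimeSpectrum.isClosed_zeroLocus _).isLocallyClosed.inter
          (PrimeSpectrum.isClosed_zeroLocus _).isOpen_compl.isLocallyClosed
      · exact (hcl.preimage (PrimeSpectrum.continuous_comap φ)).isLocallyClosed
    obtain ⟨v, ⟨hv1, hv2⟩, hv3⟩ := nonempty_inter_closedPoints ⟨w, Set.mem_inter hw hwx⟩ hlc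
    rw [mem_closedPoints_iff, PrimeSpectrum.isClosed_singleton_iff_isMaximal,
      isMaximal_iff_eq_vanishingIdeal_singleton] at hv3
    obtain ⟨z, hz⟩ := hv3
    have hvz : v = pointToPoint (k := ℂ) z := PrimeSpectrum.ext hz
    have hPz : P (fun i => z (.inl i)) (fun i => z (.inr i)) := (hx z).2 (by
      rw [PrimeSpectrum.ConstructibleSetData.toSet, Set.mem_iUnion₂]
      exact ⟨D, hD, hvz ▸ hv1⟩)
    have hzx : (fun i => z (.inl i)) = x := by
      rw [hvz, Set.mem_preimage, hpt, Set.mem_singleton_iff] at hv2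
      funext i
      have h1 : (X i - C (x i) : MvPolynomial σ ℂ) ∈ (pointToPoint (k := ℂ) x).asIdeal := by
        rw [mem_pointToPoint]; simp
      rw [← hv2, mem_pointToPoint] at h1
      simpa [sub_eq_zero] using h1
    rw [hzx] at hPz
    exact ⟨_, hPz⟩

theorem Cons.forall {τ : Type} [Finite σ] [Finite τ] {P : (σ → ℂ) → (τ → ℂ) → Prop}
    (h : Cons (fun z : σ ⊕ τ → ℂ => P (fun i => z (.inl i)) (fun i => z (.inr i)))) :
    Cons (fun x => ∀ y, P x y) :=
  (Cons.exists (P := fun x y => ¬ P x y) h.not).not.congr fun x => by simp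

end basic

section polyfun
variable {σ : Type} {f g : (σ → ℂ) → ℂ}

theorem PolyFun.const (a : ℂ) : PolyFun (fun _ : σ → ℂ => a) := ⟨C a, by simp⟩
theorem PolyFun.coord (i : σ) : PolyFun (fun x : σ → ℂ => x i) := ⟨X i, by simp⟩
theorem PolyFun.add (hf : PolyFun f) (hg : PolyFun g) : PolyFun (fun x => f x + g x) := by
  obtain ⟨p, hp⟩ := hf
  obtain ⟨q, hq⟩ := hg
  exact ⟨p + q, by simp [hp, hq]⟩
theorem PolyFun.sub (hf : PolyFun f) (hg : PolyFun g) : PolyFun (fun x => f x - g x) := by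
  obtain ⟨p, hp⟩ := hf
  obtain ⟨q, hq⟩ := hg
  exact ⟨p - q, by simp [hp, hq]⟩
theorem PolyFun.mul (hf : PolyFun f) (hg : PolyFun g) : PolyFun (fun x => f x * g x) := by
  obtain ⟨p, hp⟩ := hf
  obtain ⟨q, hq⟩ := hg
  exact ⟨p * q, by simp [hp, hq]⟩
theorem PolyFun.sum {ι : Type*} (s : Finset ι) {f : ι → (σ → ℂ) → ℂ} (hf : ∀ i, PolyFun (f i)) :
    PolyFun (fun x => ∑ i ∈ s, f i x) := by
  choose p hp using hf
  exact ⟨∑ i ∈ s, p i, by simp [hp]⟩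
theorem PolyFun.evalFix {τ : Type} (q : MvPolynomial τ ℂ) {y : τ → (σ → ℂ) → ℂ}
    (hy : ∀ i, PolyFun (y i)) : PolyFun (fun x => eval (fun i => y i x) q) := by
  induction q using MvPolynomial.induction_on with
  | C a => simpa using PolyFun.const a
  | add p q hp hq => simpa using hp.add hq
  | mul_X p i hp => simpa using hp.mul (hy i)

theorem Cons.eq (hf : PolyFun f) (hg : PolyFun g) : Cons (fun x => f x = g x) :=
  (Cons.eqZero (hf.sub hg)).congr fun x => by rw [sub_eq_zero]

/-- Families of polynomials whose coefficients are polynomial functions of the parameter. -/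
def PolyFam {τ : Type} (G : (σ → ℂ) → MvPolynomial τ ℂ) : Prop :=
  ∀ b, PolyFun (fun x => coeff b (G x))

variable {τ : Type} {G H : (σ → ℂ) → MvPolynomial τ ℂ}

theorem PolyFam.const (q : MvPolynomial τ ℂ) : PolyFam (fun _ : σ → ℂ => q) :=
  fun _ => PolyFun.const _
theorem PolyFam.add (hG : PolyFam G) (hH : PolyFam H) : PolyFam (fun x => G x + H x) :=
  fun b => by simpa using (hG b).add (hH b)
theorem PolyFam.mul (hG : PolyFam G) (hH : PolyFam H) : PolyFam (fun x => G x * H x) := by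
  classical
  intro b
  simp_rw [coeff_mul]
  exact PolyFun.sum _ fun i => (hG _).mul (hH _)
theorem PolyFam.sum {ι : Type*} (s : Finset ι) {G : ι → (σ → ℂ) → MvPolynomial τ ℂ}
    (h : ∀ i, PolyFam (G i)) : PolyFam (fun x => ∑ i ∈ s, G i x) := by
  intro b
  simp_rw [coeff_sum]
  exact PolyFun.sum _ fun i => h i b
theorem PolyFam.C (hf : PolyFun f) : PolyFam (fun x => (MvPolynomial.C (f x) : MvPolynomial τ ℂ)) := by
  classical
  intro b
  simp_rw [coeff_C]
  split_ifs
  · exact hf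
  · exact PolyFun.const _
theorem PolyFam.aevalFix {ρ : Type} (q : MvPolynomial ρ ℂ) {G : ρ → (σ → ℂ) → MvPolynomial τ ℂ}
    (h : ∀ i, PolyFam (G i)) : PolyFam (fun x => aeval (fun i => G i x) q) := by
  induction q using MvPolynomial.induction_on with
  | C a => simpa using PolyFam.const _
  | add p q hp hq => simpa using hp.add hq
  | mul_X p i hp => simpa using hp.mul (h i)

end polyfun

end PolyTop

namespace PolyTop

/-! ### Local algebra in the ring of formal power series -/

/-- The ring of formal power series. -/
abbrev PS (n : ℕ) := MvPowerSeries (Fin n) ℂ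

/-- Exponents of degree less than `N`. -/
abbrev EIdx (n N : ℕ) := {e : Fin n →₀ ℕ // e.degree < N}

instance eidxFintype (n N : ℕ) : Fintype (EIdx n N) :=
  Set.Finite.fintype (s := {e : Fin n →₀ ℕ | e.degree < N}) (Finsupp.finite_of_degree_lt N)

/-- The ideal of power series of order at least `N`. -/
def KI (n N : ℕ) : Ideal (PS n) where
  carrier := {φ | ∀ e : Fin n →₀ ℕ, e.degree < N → MvPowerSeries.coeff e φ = 0}
  zero_mem' := fun e _ => by simp
  add_mem' := fun {a b} ha hb e he => by rw [map_add, ha e he, hb e he, add_zero]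
  smul_mem' := fun c φ hφ e he => by
    classical
    rw [smul_eq_mul, MvPowerSeries.coeff_mul]
    refine Finset.sum_eq_zero fun p hp => ?_
    rw [hφ p.2 ?_, mul_zero]
    rw [← Finset.HasAntidiagonal.mem_antidiagonal.1 hp, map_add] at he
    omega

theorem mem_KI {n N : ℕ} {φ : PS n} : φ ∈ KI n N ↔
    ∀ e : Fin n →₀ ℕ, e.degree < N → MvPowerSeries.coeff e φ = 0 := Iff.rfl

theorem KI_anti {n N M : ℕ} (h : N ≤ M) : KI n M ≤ KI n N :=
  fun _ hφ e he => hφ e (lt_of_lt_of_le he h)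

theorem KI_zero (n : ℕ) : KI n 0 = ⊤ := by
  rw [Ideal.eq_top_iff_one]
  intro e he
  omega

/-- Truncation in degrees less than `N`. -/
def trN {n : ℕ} (N : ℕ) (g : PS n) : PS n :=
  ∑ a : EIdx n N, MvPowerSeries.coeff a.1 g • MvPowerSeries.monomial a.1 (1 : ℂ)

theorem coeff_lin {n N : ℕ} (v : EIdx n N → ℂ) (e : Fin n →₀ ℕ) :
    MvPowerSeries.coeff e (∑ a : EIdx n N, v a • MvPowerSeries.monomial a.1 (1 : ℂ)) =
      if h : e.degree < N then v ⟨e, h⟩ else 0 := by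
  classical
  rw [map_sum]
  simp only [MvPowerSeries.coeff_smul, MvPowerSeries.coeff_monomial, mul_ite, mul_one, mul_zero]
  split_ifs with h
  · rw [Finset.sum_eq_single ⟨e, h⟩]
    · simp
    · intro b _ hb
      rw [if_neg]
      rintro rfl
      exact hb rfl
    · simp
  · refine Finset.sum_eq_zero fun b _ => ?_
    rw [if_neg]
    rintro rfl
    exact h b.2

theorem sub_trN_mem {n : ℕ} (N : ℕ) (g : PS n) : g - trN N g ∈ KI n N := by
  intro e he
  rw [map_sub, trN, coeff_lin, dif_pos he, sub_self]

theorem mem_sup_KI {n N : ℕ} (h : Fin n → PS n) (x : PS n) :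
    x ∈ Ideal.span (Set.range h) ⊔ KI n N ↔ ∃ s : EIdx n N × Fin n → ℂ, ∀ e : EIdx n N,
      MvPowerSeries.coeff e.1 x = ∑ p, s p * MvPowerSeries.coeff e.1
        (MvPowerSeries.monomial p.1.1 (1 : ℂ) * h p.2) := by
  constructor
  · intro hx
    obtain ⟨y, hy, z, hz, rfl⟩ := Submodule.mem_sup.1 hx
    obtain ⟨c, rfl⟩ := Ideal.mem_span_range_iff_exists_fun.1 hy
    refine ⟨fun p => MvPowerSeries.coeff p.1.1 (c p.2), fun e => ?_⟩
    rw [map_add, hz e.1 e.2, add_zero, map_sum, Fintype.sum_prod_type_right]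
    refine Finset.sum_congr rfl fun i _ => ?_
    have h1 : (c i - trN N (c i)) * h i ∈ KI n N :=
      Ideal.mul_mem_right _ _ (sub_trN_mem N (c i))
    have h2 := h1 e.1 e.2
    rw [sub_mul, map_sub, sub_eq_zero] at h2
    rw [h2, trN, Finset.sum_mul, map_sum]
    refine Finset.sum_congr rfl fun a _ => ?_
    rw [smul_mul_assoc, MvPowerSeries.coeff_smul]
  · rintro ⟨s, hs⟩
    have h1 : x - ∑ p : EIdx n N × Fin n, s p • (MvPowerSeries.monomial p.1.1 (1 : ℂ) * h p.2)
        ∈ KI n N := by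
      intro e he
      rw [map_sub, hs ⟨e, he⟩, map_sum]
      simp only [MvPowerSeries.coeff_smul, sub_self]
    have h2 : ∑ p : EIdx n N × Fin n, s p • (MvPowerSeries.monomial p.1.1 (1 : ℂ) * h p.2)
        ∈ Ideal.span (Set.range h) := by
      refine Submodule.sum_mem _ fun p _ => ?_
      refine Submodule.smul_of_tower_mem _ _ (Ideal.mul_mem_left _ _ (Ideal.subset_span ⟨_, rfl⟩))
    rw [← sub_add_cancel x (∑ p : EIdx n N × Fin n,
      s p • (MvPowerSeries.monomial p.1.1 (1 : ℂ) * h p.2))]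
    exact Submodule.add_mem _ (Submodule.mem_sup_right h1) (Submodule.mem_sup_left h2)

theorem finite_quot {n : ℕ} {J : Ideal (PS n)} {N : ℕ} (h : KI n N ≤ J) :
    Module.Finite ℂ (PS n ⧸ J) := by
  let f : (EIdx n N → ℂ) →ₗ[ℂ] (PS n ⧸ J) :=
    Fintype.linearCombination ℂ (fun a : EIdx n N =>
      Ideal.Quotient.mk J (MvPowerSeries.monomial a.1 (1 : ℂ)))
  refine Module.Finite.of_surjective f fun y => ?_
  obtain ⟨g, rfl⟩ := Ideal.Quotient.mk_surjective y
  refine ⟨fun a => MvPowerSeries.coeff a.1 g, ?_⟩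
  have h1 : Ideal.Quotient.mk J g = Ideal.Quotient.mk J (trN N g) :=
    Ideal.Quotient.eq.2 (h (sub_trN_mem N g))
  rw [h1, trN, map_sum]
  simp only [f, Fintype.linearCombination_apply]
  rfl

theorem finrank_le_iff {n : ℕ} (I : Ideal (PS n)) [Module.Finite ℂ (PS n ⧸ I)] (j : ℕ) :
    Module.finrank ℂ (PS n ⧸ I) ≤ j ↔
      ∃ w : Fin j → PS n, ∀ v : PS n, ∃ b : Fin j → ℂ, v - ∑ l, b l • w l ∈ I := by
  have key : ∀ (w : Fin j → PS n) (b : Fin j → ℂ), Ideal.Quotient.mk I (∑ l, b l • w l) =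
      Fintype.linearCombination ℂ (fun l => Ideal.Quotient.mk I (w l)) b := by
    intro w b
    rw [Fintype.linearCombination_apply, map_sum]
    rfl
  constructor
  · intro h
    let B := Module.finBasis ℂ (PS n ⧸ I)
    have : ∃ u : Fin j → (PS n ⧸ I),
        Function.Surjective (Fintype.linearCombination ℂ u) := by
      refine ⟨fun l => if hl : l.1 < Module.finrank ℂ (PS n ⧸ I) then B ⟨l.1, hl⟩ else 0, ?_⟩
      rw [← LinearMap.range_eq_top, Fintype.range_linearCombination, eq_top_iff, ← B.span_eq]
      refine Submodule.span_mono ?_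
      rintro _ ⟨i, rfl⟩
      exact ⟨⟨i.1, lt_of_lt_of_le i.2 h⟩, by simp⟩
    obtain ⟨u, hu⟩ := this
    choose w hw using fun l => Ideal.Quotient.mk_surjective (u l)
    refine ⟨w, fun v => ?_⟩
    obtain ⟨b, hb⟩ := hu (Ideal.Quotient.mk I v)
    refine ⟨b, Ideal.Quotient.eq.1 ?_⟩
    rw [key, ← hb]
    simp only [hw]
  · rintro ⟨w, hw⟩
    have hs : Function.Surjective
        (Fintype.linearCombination ℂ (fun l => Ideal.Quotient.mk I (w l))) := by
      intro y
      obtain ⟨v, rfl⟩ := Ideal.Quotient.mk_surjective y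
      obtain ⟨b, hb⟩ := hw v
      exact ⟨b, by rw [← key]; exact (Ideal.Quotient.eq.2 hb).symm⟩
    simpa using LinearMap.finrank_le_finrank_of_surjective hs

theorem finrank_lt {n : ℕ} {I I' : Ideal (PS n)} [Module.Finite ℂ (PS n ⧸ I)]
    [Module.Finite ℂ (PS n ⧸ I')] (h : I < I') :
    Module.finrank ℂ (PS n ⧸ I') < Module.finrank ℂ (PS n ⧸ I) := by
  let f : (PS n ⧸ I) →ₗ[ℂ] (PS n ⧸ I') := (Ideal.Quotient.factorₐ ℂ h.le).toLinearMap
  have hf : Function.Surjective f := Ideal.Quotient.factor_surjective h.le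
  refine lt_of_le_of_ne (LinearMap.finrank_le_finrank_of_surjective hf) fun he => ?_
  have hi := (LinearMap.injective_iff_surjective_of_finrank_eq_finrank he.symm).2 hf
  refine (not_le_of_gt h) fun x hx => ?_
  rw [← Ideal.Quotient.eq_zero_iff_mem]
  apply hi
  rw [map_zero]
  exact Ideal.Quotient.eq_zero_iff_mem.2 hx

/-- If the filtration stabilises once, it stabilises forever. -/
theorem KI_step {n : ℕ} {J : Ideal (PS n)} {i : ℕ} (h : KI n i ≤ J ⊔ KI n (i + 1)) :
    KI n (i + 1) ≤ J ⊔ KI n (i + 2) := by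
  classical
  intro g hg
  have h1 := sub_trN_mem (i + 2) g
  rw [← sub_add_cancel g (trN (i + 2) g)]
  refine Submodule.add_mem _ (Submodule.mem_sup_right h1) ?_
  refine Submodule.sum_mem _ fun a _ => ?_
  by_cases ha : a.1.degree < i + 1
  · rw [hg a.1 ha, zero_smul]; exact zero_mem _
  · refine Submodule.smul_of_tower_mem _ _ ?_
    have ha0 : a.1 ≠ 0 := by
      intro h0
      rw [h0] at ha
      simp at ha
    obtain ⟨t, ht⟩ := Finsupp.ne_iff.1 ha0
    have hsplit : a.1 = Finsupp.single t 1 + (a.1 - Finsupp.single t 1) := by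
      rw [add_tsub_cancel_of_le]
      rw [Finsupp.single_le_iff]
      exact Nat.one_le_iff_ne_zero.2 ht
    have hdeg : i ≤ (a.1 - Finsupp.single t 1).degree := by
      have := congrArg Finsupp.degree hsplit
      rw [map_add, Finsupp.degree_single] at this
      omega
    have hm : (MvPowerSeries.monomial a.1 (1 : ℂ) : PS n) = MvPowerSeries.X t *
        MvPowerSeries.monomial (a.1 - Finsupp.single t 1) (1 : ℂ) := by
      rw [MvPowerSeries.X, MvPowerSeries.monomial_mul_monomial, ← hsplit, one_mul]
    have hmem : (MvPowerSeries.monomial (a.1 - Finsupp.single t 1) (1 : ℂ) : PS n) ∈ KI n i := by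
      intro e he
      rw [MvPowerSeries.coeff_monomial, if_neg]
      rintro rfl
      omega
    obtain ⟨y, hy, z, hz, hyz⟩ := Submodule.mem_sup.1 (h hmem)
    rw [hm, ← hyz, mul_add]
    refine Submodule.add_mem _ (Submodule.mem_sup_left (Ideal.mul_mem_left _ _ hy))
      (Submodule.mem_sup_right ?_)
    intro e he
    rw [MvPowerSeries.X, MvPowerSeries.coeff_monomial_mul]
    split_ifs with hle
    · rw [hz _ ?_, mul_zero]
      have := congrArg Finsupp.degree (add_tsub_cancel_of_le hle)
      rw [map_add, Finsupp.degree_single] at this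
      omega
    · rfl

theorem KI_stable {n : ℕ} {J : Ideal (PS n)} {i : ℕ} (h : KI n i ≤ J ⊔ KI n (i + 1)) (m : ℕ) :
    KI n i ≤ J ⊔ KI n (i + m) ∧ KI n (i + m) ≤ J ⊔ KI n (i + m + 1) := by
  induction m with
  | zero => exact ⟨le_sup_right, h⟩
  | succ m ih =>
    exact ⟨ih.1.trans (sup_le le_sup_left ih.2), KI_step ih.2⟩

theorem finrank_trunc {n : ℕ} {J : Ideal (PS n)} {N : ℕ} (hN : KI n N ≤ J) (j : ℕ) :
    Module.finrank ℂ (PS n ⧸ J) ≤ j ↔ Module.finrank ℂ (PS n ⧸ (J ⊔ KI n (j + 1))) ≤ j := by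
  have hfin : ∀ i, Module.Finite ℂ (PS n ⧸ (J ⊔ KI n i)) := fun i => finite_quot le_sup_right
  have hJ : Module.Finite ℂ (PS n ⧸ J) := finite_quot hN
  constructor
  · refine fun h => le_trans ?_ h
    exact LinearMap.finrank_le_finrank_of_surjective
      (f := (Ideal.Quotient.factorₐ ℂ (le_sup_left : J ≤ J ⊔ KI n (j + 1))).toLinearMap)
      (Ideal.Quotient.factor_surjective le_sup_left)
  · intro h
    by_cases hst : ∃ i ≤ j, KI n i ≤ J ⊔ KI n (i + 1)
    · obtain ⟨i, hij, hi⟩ := hst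
      have h1 : KI n i ≤ J := by
        refine (KI_stable hi N).1.trans (sup_le le_rfl ((KI_anti ?_).trans hN))
        omega
      have h2 : J ⊔ KI n (j + 1) = J :=
        sup_eq_left.2 ((KI_anti (by omega)).trans h1)
      rwa [h2] at h
    · push Not at hst
      have : ∀ i ≤ j + 1, i ≤ Module.finrank ℂ (PS n ⧸ (J ⊔ KI n i)) := by
        intro i
        induction i with
        | zero => intro _; exact Nat.zero_le _
        | succ i ih =>
          intro hi
          have hlt : J ⊔ KI n (i + 1) < J ⊔ KI n i := by
            refine lt_of_le_of_ne (sup_le_sup le_rfl (KI_anti (by omega))) fun he => ?_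
            exact hst i (by omega) (he ▸ le_sup_right)
          have := finrank_lt hlt
          have := ih (by omega)
          omega
      have := this (j + 1) le_rfl
      omega

/-- The first-order characterisation of `finrank ≤ j`. -/
theorem finrank_le_char {n : ℕ} (h : Fin n → PS n) {N : ℕ}
    (hN : KI n N ≤ Ideal.span (Set.range h)) (j : ℕ) :
    Module.finrank ℂ (PS n ⧸ Ideal.span (Set.range h)) ≤ j ↔
      ∃ w : Fin j × EIdx n (j + 1) → ℂ, ∀ v : EIdx n (j + 1) → ℂ,
        ∃ b : Fin j → ℂ, ∃ s : EIdx n (j + 1) × Fin n → ℂ, ∀ e : EIdx n (j + 1),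
          v e = (∑ l, b l * w (l, e)) + ∑ p, s p * MvPowerSeries.coeff e.1
            (MvPowerSeries.monomial p.1.1 (1 : ℂ) * h p.2) := by
  have hfin : Module.Finite ℂ (PS n ⧸ (Ideal.span (Set.range h) ⊔ KI n (j + 1))) :=
    finite_quot le_sup_right
  rw [finrank_trunc hN, finrank_le_iff]
  simp only [mem_sup_KI, map_sub, map_sum, MvPowerSeries.coeff_smul]
  constructor
  · rintro ⟨w, hw⟩
    refine ⟨fun p => MvPowerSeries.coeff p.2.1 (w p.1), fun v => ?_⟩
    obtain ⟨b, s, hs⟩ := hw (∑ a, v a • MvPowerSeries.monomial a.1 (1 : ℂ))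
    refine ⟨b, s, fun e => ?_⟩
    have := hs e
    rw [coeff_lin, dif_pos e.2] at this
    rw [← this]; ring
  · rintro ⟨w, hw⟩
    refine ⟨fun l => ∑ a, w (l, a) • MvPowerSeries.monomial a.1 (1 : ℂ), fun v => ?_⟩
    obtain ⟨b, s, hs⟩ := hw (fun e => MvPowerSeries.coeff e.1 v)
    refine ⟨b, s, fun e => ?_⟩
    rw [hs e]
    simp only [coeff_lin, dif_pos e.2]
    ring

/-- If powers of all the variables are in `J`, so are all power series of large order. -/
theorem KI_le_of_pow {n : ℕ} {J : Ideal (PS n)} (a : ℕ)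
    (h : ∀ i, (MvPowerSeries.X i : PS n) ^ a ∈ J) : KI n (n * a + 1) ≤ J := by
  classical
  intro g hg
  have hex : ∀ e : Fin n →₀ ℕ, n * a + 1 ≤ e.degree → ∃ i, a ≤ e i := by
    intro e he
    by_contra hcon
    push Not at hcon
    have : e.degree ≤ n * a := by
      rw [Finsupp.degree_eq_sum]
      calc ∑ i, e i ≤ ∑ _i : Fin n, a := Finset.sum_le_sum fun i _ => (hcon i).le
        _ = n * a := by simp
    omega
  let ch : (Fin n →₀ ℕ) → Option (Fin n) := fun e =>
    if h : n * a + 1 ≤ e.degree then some (hex e h).choose else none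
  have hch : ∀ e i, ch e = some i → a ≤ e i := by
    intro e i hi
    simp only [ch] at hi
    split_ifs at hi with h0
    rw [Option.some.injEq] at hi
    rw [← hi]
    exact (hex e h0).choose_spec
  let gi : Fin n → PS n := fun i => fun e =>
    if ch (e + Finsupp.single i a) = some i then
      MvPowerSeries.coeff (e + Finsupp.single i a) g else 0
  have hsum : g = ∑ i, MvPowerSeries.X i ^ a * gi i := by
    ext e
    rw [map_sum]
    have hterm : ∀ i, MvPowerSeries.coeff e ((MvPowerSeries.X i : PS n) ^ a * gi i) =
        if ch e = some i then MvPowerSeries.coeff e g else 0 := by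
      intro i
      rw [MvPowerSeries.X_pow_eq, MvPowerSeries.coeff_monomial_mul, one_mul]
      by_cases hle : Finsupp.single i a ≤ e
      · rw [if_pos hle]
        change (if ch (e - Finsupp.single i a + Finsupp.single i a) = some i then
          MvPowerSeries.coeff (e - Finsupp.single i a + Finsupp.single i a) g else 0) = _
        rw [tsub_add_cancel_of_le hle]
      · rw [if_neg hle, if_neg]
        intro hc
        exact hle (Finsupp.single_le_iff.2 (hch e i hc))
    simp only [hterm]
    by_cases hd : n * a + 1 ≤ e.degree
    · have hs : ch e = some (hex e hd).choose := by simp only [ch]; rw [dif_pos hd]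
      simp [hs]
    · rw [hg e (by omega)]
      simp
  rw [hsum]
  exact Submodule.sum_mem _ fun i _ => Ideal.mul_mem_right _ _ (h i)

end PolyTop

namespace PolyTop

/-- The translated partial derivative, as a power series. -/
def jgen {n : ℕ} (f : MvPolynomial (Fin n) ℂ) (p : Fin n → ℂ) (i : Fin n) : PS n :=
  MvPolynomial.coeToMvPowerSeries.ringHom
      ((aeval fun j : Fin n => (X j + C (p j) : MvPolynomial (Fin n) ℂ)) (pderiv i f))

theorem jacIdeal_eq {n : ℕ} (f : MvPolynomial (Fin n) ℂ) (p : Fin n → ℂ) :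
    jacIdeal f p = Ideal.span (Set.range (jgen f p)) := rfl

/-- With isolated singularities, the Jacobian ideal contains all series of large order. -/
theorem exists_KI_le {n : ℕ} (f : MvPolynomial (Fin n) ℂ) (hf : (AffSing f).Finite)
    (p : Fin n → ℂ) : ∃ N, KI n N ≤ jacIdeal f p := by
  classical
  let J0 : Ideal (MvPolynomial (Fin n) ℂ) := Ideal.span (Set.range fun i => pderiv i f)
  let φ : MvPolynomial (Fin n) ℂ →+* PS n := MvPolynomial.coeToMvPowerSeries.ringHom.comp
    (aeval fun j : Fin n => (X j + C (p j) : MvPolynomial (Fin n) ℂ)).toRingHom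
  have hφ : ∀ g ∈ J0, φ g ∈ jacIdeal f p := by
    intro g hg
    have : J0 ≤ (jacIdeal f p).comap φ := by
      rw [Ideal.span_le]
      rintro _ ⟨i, rfl⟩
      exact Ideal.subset_span ⟨i, rfl⟩
    exact this hg
  have hX : ∀ i, ∃ a, (MvPowerSeries.X i : PS n) ^ a ∈ jacIdeal f p := by
    intro i
    let Q : MvPolynomial (Fin n) ℂ := ∏ q ∈ hf.toFinset, (X i - C (q i))
    have hQ : Q ∈ J0.radical := by
      rw [← vanishingIdeal_zeroLocus_eq_radical (K := ℂ) J0, mem_vanishingIdeal_iff]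
      intro x hx
      have hxs : x ∈ AffSing f := fun i => hx _ (Ideal.subset_span ⟨i, rfl⟩)
      rw [map_prod]
      refine Finset.prod_eq_zero (hf.mem_toFinset.2 hxs) ?_
      simp
    obtain ⟨b, hb⟩ := hQ
    have h1 := hφ _ hb
    have h2 : ∀ q : Fin n → ℂ, ∃ t : ℕ, ∃ u : PS n, IsUnit u ∧
        φ (X i - C (q i)) = MvPowerSeries.X i ^ t * u := by
      intro q
      have he : φ (X i - C (q i)) = MvPowerSeries.X i + MvPowerSeries.C (p i - q i) := by
        simp only [φ, RingHom.comp_apply, AlgHom.toRingHom_eq_coe, RingHom.coe_coe, map_sub,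
          aeval_X, aeval_C, map_add]
        simp
        ring
      by_cases hpq : p i = q i
      · exact ⟨1, 1, isUnit_one, by rw [he, hpq]; simp⟩
      · refine ⟨0, _, ?_, by rw [pow_zero, one_mul]⟩
        rw [he, MvPowerSeries.isUnit_iff_constantCoeff]
        simp [sub_ne_zero.2 hpq]
    choose t u hu htu using h2
    have h3 : φ Q = MvPowerSeries.X i ^ (∑ q ∈ hf.toFinset, t q) * ∏ q ∈ hf.toFinset, u q := by
      rw [map_prod, ← Finset.prod_pow_eq_pow_sum, ← Finset.prod_mul_distrib]
      exact Finset.prod_congr rfl fun q _ => htu q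
    have hU : IsUnit (∏ q ∈ hf.toFinset, u q) := by
      rw [← Finset.prod_attach]
      exact (IsUnit.prod_univ_iff.2 fun q => hu _)
    rw [map_pow, h3, mul_pow, ← pow_mul] at h1
    exact ⟨_, (Ideal.mul_unit_mem_iff_mem _ (hU.pow b)).1 h1⟩
  choose a ha using hX
  refine ⟨n * (∑ i, a i) + 1, KI_le_of_pow _ fun i => ?_⟩
  rw [← Nat.sub_add_cancel (Finset.single_le_sum (f := a) (fun _ _ => Nat.zero_le _)
    (Finset.mem_univ i)), pow_add]
  exact Ideal.mul_mem_left _ _ (ha i)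

theorem constantCoeff_jgen {n : ℕ} (f : MvPolynomial (Fin n) ℂ) (p : Fin n → ℂ) (i : Fin n) :
    MvPowerSeries.constantCoeff (jgen f p i) = eval p (pderiv i f) := by
  have h : ∀ g : MvPolynomial (Fin n) ℂ, MvPowerSeries.constantCoeff
      (MvPolynomial.coeToMvPowerSeries.ringHom
      ((aeval fun j : Fin n => (X j + C (p j) : MvPolynomial (Fin n) ℂ)) g)) = eval p g := by
    intro g
    induction g using MvPolynomial.induction_on with
    | C a => simp
    | add p q hp hq => simp only [map_add, hp, hq]
    | mul_X p i hp =>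
      simp only [map_mul, hp, aeval_X, eval_X, map_add]
      simp
  exact h _

theorem muLoc_pos {n : ℕ} (f : MvPolynomial (Fin n) ℂ) (hf : (AffSing f).Finite)
    {p : Fin n → ℂ} (hp : p ∈ AffSing f) : 0 < muLoc f p := by
  obtain ⟨N, hN⟩ := exists_KI_le f hf p
  have := finite_quot hN
  have hne : jacIdeal f p ≠ ⊤ := by
    intro h
    have hle : jacIdeal f p ≤ RingHom.ker (MvPowerSeries.constantCoeff (σ := Fin n) (R := ℂ)) := by
      rw [jacIdeal_eq, Ideal.span_le]
      rintro _ ⟨i, rfl⟩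
      exact (constantCoeff_jgen f p i).trans (hp i)
    rw [h] at hle
    have := hle (Submodule.mem_top (x := 1))
    rw [RingHom.mem_ker, map_one] at this
    exact one_ne_zero this
  have := Ideal.Quotient.nontrivial_iff.2 hne
  exact Module.finrank_pos

end PolyTop

namespace PolyTop

/-- First-order formulation of `muLoc f p ≤ j`. -/
def MuLe {n : ℕ} (j : ℕ) (f : MvPolynomial (Fin n) ℂ) (p : Fin n → ℂ) : Prop :=
  ∃ w : Fin j × EIdx n (j + 1) → ℂ, ∀ v : EIdx n (j + 1) → ℂ,
    ∃ b : Fin j → ℂ, ∃ s : EIdx n (j + 1) × Fin n → ℂ, ∀ e : EIdx n (j + 1),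
      v e = (∑ l, b l * w (l, e)) + ∑ q, s q * MvPowerSeries.coeff e.1
        (MvPowerSeries.monomial q.1.1 (1 : ℂ) * jgen f p q.2)

theorem muLoc_le_iff {n : ℕ} {f : MvPolynomial (Fin n) ℂ} (hf : (AffSing f).Finite)
    (p : Fin n → ℂ) (j : ℕ) : muLoc f p ≤ j ↔ MuLe j f p := by
  obtain ⟨N, hN⟩ := exists_KI_le f hf p
  exact finrank_le_char (jgen f p) hN j

theorem muLoc_eq_iff {n : ℕ} {f : MvPolynomial (Fin n) ℂ} (hf : (AffSing f).Finite)
    (p : Fin n → ℂ) (j : ℕ) : muLoc f p = j ↔ MuLe j f p ∧ ∀ j' : Fin j, ¬ MuLe j' f p := by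
  simp only [← muLoc_le_iff hf]
  constructor
  · rintro rfl
    exact ⟨le_rfl, fun j' => not_le.2 j'.2⟩
  · rintro ⟨h1, h2⟩
    by_contra hne
    exact h2 ⟨muLoc f p, lt_of_le_of_ne h1 hne⟩ le_rfl

theorem mu_eq_sum {n r : ℕ} {f : MvPolynomial (Fin n) ℂ} {P : Fin r → Fin n → ℂ}
    (hP : Function.Injective P) (h : AffSing f = Set.range P) :
    mu f = ∑ t, muLoc f (P t) := by
  unfold mu
  rw [h, finsum_mem_range hP, finsum_eq_sum_of_fintype]

theorem mu_char {n : ℕ} (f : MvPolynomial (Fin n) ℂ) (m : ℕ) :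
    ((AffSing f).Finite ∧ mu f = m) ↔
    ∃ r : Fin (m + 1), ∃ p : Fin r × Fin n → ℂ,
      (∀ t t' : Fin r, (∀ i, p (t, i) = p (t', i)) → t = t') ∧
      (∀ x : Fin n → ℂ, (∀ i, eval x (pderiv i f) = 0) ↔ ∃ t, ∀ i, x i = p (t, i)) ∧
      ∃ jj : Fin r → Fin (m + 1), (∑ t, (jj t : ℕ) = m) ∧
        ∀ t, MuLe (jj t) f (fun i => p (t, i)) ∧
          ∀ j' : Fin (jj t), ¬ MuLe j' f (fun i => p (t, i)) := by
  constructor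
  · rintro ⟨hfin, hm⟩
    obtain ⟨r, P, hP, hr⟩ : ∃ r : ℕ, ∃ P : Fin r → Fin n → ℂ, Function.Injective P ∧
        AffSing f = Set.range P := by
      refine ⟨hfin.toFinset.card, fun t => (hfin.toFinset.equivFin.symm t).1, ?_, ?_⟩
      · exact Subtype.val_injective.comp (Equiv.injective _)
      · ext x
        rw [Set.mem_range]
        constructor
        · intro hx
          exact ⟨hfin.toFinset.equivFin ⟨x, hfin.mem_toFinset.2 hx⟩, by simp⟩
        · rintro ⟨t, rfl⟩
          exact hfin.mem_toFinset.1 (hfin.toFinset.equivFin.symm t).2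
    have hsum := mu_eq_sum hP hr
    rw [hm] at hsum
    have hpos : ∀ t, 1 ≤ muLoc f (P t) := fun t => muLoc_pos f hfin (hr ▸ ⟨t, rfl⟩)
    have hrm : r ≤ m := by
      rw [hsum]
      calc r = ∑ _t : Fin r, 1 := by simp
        _ ≤ _ := Finset.sum_le_sum fun t _ => hpos t
    have hle : ∀ t, muLoc f (P t) ≤ m := fun t => by
      rw [hsum]
      exact Finset.single_le_sum (f := fun t => muLoc f (P t)) (fun _ _ => Nat.zero_le _)
        (Finset.mem_univ t)
    refine ⟨⟨r, by omega⟩, fun q => P q.1 q.2, fun t t' h => hP (funext h), fun x => ?_,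
      fun t => ⟨muLoc f (P t), Nat.lt_succ_of_le (hle t)⟩, hsum.symm, fun t => ?_⟩
    · change x ∈ AffSing f ↔ _
      rw [hr, Set.mem_range]
      exact exists_congr fun t => ⟨fun h i => by rw [← h], fun h => (funext h).symm⟩
    · exact (muLoc_eq_iff hfin (P t) _).1 rfl
  · rintro ⟨⟨r, hrm⟩, p, hinj, hx, jj, hjj, hmu⟩
    let P : Fin r → Fin n → ℂ := fun t i => p (t, i)
    have hP : Function.Injective P := fun t t' h => hinj t t' fun i => congrFun h i
    have hr : AffSing f = Set.range P := by
      ext x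
      refine (hx x).trans ?_
      rw [Set.mem_range]
      exact exists_congr fun t => ⟨fun h => (funext h).symm, fun h i => by rw [← h]⟩
    have hfin : (AffSing f).Finite := hr ▸ Set.finite_range P
    refine ⟨hfin, ?_⟩
    rw [mu_eq_sum hP hr, ← hjj]
    exact Finset.sum_congr rfl fun t _ => (muLoc_eq_iff hfin (P t) _).2 (hmu t)

theorem Baff_char {n : ℕ} (f : MvPolynomial (Fin n) ℂ) (hf : (AffSing f).Finite) (k : ℕ) :
    (Baff f).ncard = k ↔ ∃ t : Fin k → ℂ, (∀ a b, t a = t b → a = b) ∧ ∀ s : Unit → ℂ,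
      (∃ x : Fin n → ℂ, (∀ i, eval x (pderiv i f) = 0) ∧ eval x f = s ()) ↔
        ∃ a, s () = t a := by
  have hB : (Baff f).Finite := hf.image _
  have hmem : ∀ s : ℂ, s ∈ Baff f ↔
      ∃ x : Fin n → ℂ, (∀ i, eval x (pderiv i f) = 0) ∧ eval x f = s := fun s => Iff.rfl
  constructor
  · intro h
    have hc : hB.toFinset.card = k := by rw [← h, Set.ncard_eq_toFinset_card _ hB]
    refine ⟨fun a => ((hB.toFinset.equivFinOfCardEq hc).symm a).1, fun a b hab => ?_, fun s => ?_⟩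
    · exact (Equiv.injective _) (Subtype.val_injective hab)
    · rw [← hmem]
      constructor
      · intro hs
        exact ⟨hB.toFinset.equivFinOfCardEq hc ⟨s (), hB.mem_toFinset.2 hs⟩, by simp⟩
      · rintro ⟨a, ha⟩
        rw [ha]
        exact hB.mem_toFinset.1 ((hB.toFinset.equivFinOfCardEq hc).symm a).2
  · rintro ⟨t, ht, hs⟩
    have : Baff f = Set.range t := by
      ext s
      rw [hmem, hs (fun _ => s), Set.mem_range]
      exact exists_congr fun a => eq_comm
    rw [this, ← Set.image_univ, Set.ncard_image_of_injective _ (fun a b => ht a b)]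
    simp

section
variable {σ : Type} {n d : ℕ}

theorem PolyFun.weak {τ : Type} {f : (σ → ℂ) → ℂ} (hf : PolyFun f) :
    PolyFun (fun z : σ ⊕ τ → ℂ => f (fun i => z (.inl i))) := by
  obtain ⟨q, hq⟩ := hf
  simp only [hq]
  exact PolyFun.evalFix q fun i => PolyFun.coord _

theorem toPoly_lin {R : Type*} [CommRing R] [Algebra ℂ R] (c : CoeffIdx n d → ℂ)
    (L : MvPolynomial (Fin n) ℂ →ₗ[ℂ] R) : L (toPoly c) =
    ∑ e, c e • L (monomial (Finsupp.equivFunOnFinite.symm e.1) (1 : ℂ)) := by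
  unfold toPoly
  rw [map_sum]
  simp only [map_smul]

theorem PolyFun.evalToPoly {c : CoeffIdx n d → (σ → ℂ) → ℂ} (hc : ∀ e, PolyFun (c e))
    {y : Fin n → (σ → ℂ) → ℂ} (hy : ∀ i, PolyFun (y i)) :
    PolyFun (fun z => eval (fun i => y i z) (toPoly (fun e => c e z))) := by
  have : ∀ z, eval (fun i => y i z) (toPoly (fun e => c e z)) = ∑ e, c e z *
      eval (fun i => y i z) (monomial (Finsupp.equivFunOnFinite.symm e.1) (1 : ℂ)) := fun z =>
    toPoly_lin _ (aeval (fun i => y i z)).toLinearMap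
  simp only [this]
  exact PolyFun.sum _ fun e => (hc e).mul (PolyFun.evalFix _ hy)

theorem PolyFun.evalPderiv {c : CoeffIdx n d → (σ → ℂ) → ℂ} (hc : ∀ e, PolyFun (c e))
    {y : Fin n → (σ → ℂ) → ℂ} (hy : ∀ i, PolyFun (y i)) (i : Fin n) :
    PolyFun (fun z => eval (fun i => y i z) (pderiv i (toPoly (fun e => c e z)))) := by
  have : ∀ z, eval (fun i => y i z) (pderiv i (toPoly (fun e => c e z))) = ∑ e, c e z *
      eval (fun i => y i z)
        (pderiv i (monomial (Finsupp.equivFunOnFinite.symm e.1) (1 : ℂ))) := fun z =>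
    toPoly_lin _ ((aeval (fun i => y i z)).toLinearMap ∘ₗ (pderiv i).toLinearMap)
  simp only [this]
  exact PolyFun.sum _ fun e => (hc e).mul (PolyFun.evalFix _ hy)

theorem PolyFam.jac {c : CoeffIdx n d → (σ → ℂ) → ℂ} (hc : ∀ e, PolyFun (c e))
    {p : Fin n → (σ → ℂ) → ℂ} (hp : ∀ i, PolyFun (p i)) (i : Fin n) :
    PolyFam (fun z => aeval (fun j => (X j + MvPolynomial.C (p j z) : MvPolynomial (Fin n) ℂ))
      (pderiv i (toPoly (fun e => c e z)))) := by
  have : ∀ z, aeval (fun j => (X j + MvPolynomial.C (p j z) : MvPolynomial (Fin n) ℂ))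
      (pderiv i (toPoly (fun e => c e z))) = ∑ e, MvPolynomial.C (c e z) *
      aeval (fun j => (X j + MvPolynomial.C (p j z) : MvPolynomial (Fin n) ℂ))
        (pderiv i (monomial (Finsupp.equivFunOnFinite.symm e.1) (1 : ℂ))) := fun z => by
    have := toPoly_lin (fun e => c e z)
      ((aeval (fun j => (X j + MvPolynomial.C (p j z) : MvPolynomial (Fin n) ℂ))).toLinearMap ∘ₗ
        (pderiv i).toLinearMap)
    simp only [smul_eq_C_mul] at this
    exact this
  simp only [this]
  exact PolyFam.sum _ fun e => (PolyFam.C (hc e)).mul (PolyFam.aevalFix _ fun j =>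
    (PolyFam.const _).add (PolyFam.C (hp j)))

theorem PolyFun.coeffJgen {c : CoeffIdx n d → (σ → ℂ) → ℂ} (hc : ∀ e, PolyFun (c e))
    {p : Fin n → (σ → ℂ) → ℂ} (hp : ∀ i, PolyFun (p i)) (i : Fin n) (e a : Fin n →₀ ℕ) :
    PolyFun (fun z => MvPowerSeries.coeff e (MvPowerSeries.monomial a (1 : ℂ) *
      jgen (toPoly (fun e => c e z)) (fun i => p i z) i)) := by
  classical
  simp only [MvPowerSeries.coeff_monomial_mul, one_mul]
  split_ifs
  · exact PolyFam.jac hc hp i _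
  · exact PolyFun.const _

theorem Cons.muLe [Finite σ] {c : CoeffIdx n d → (σ → ℂ) → ℂ} (hc : ∀ e, PolyFun (c e))
    {p : Fin n → (σ → ℂ) → ℂ} (hp : ∀ i, PolyFun (p i)) (j : ℕ) :
    Cons (fun z => MuLe j (toPoly (fun e => c e z)) (fun i => p i z)) := by
  unfold MuLe
  refine Cons.exists (Cons.forall (Cons.exists (Cons.exists (Cons.finAll fun e => ?_))))
  refine Cons.eq (PolyFun.coord (Sum.inl (Sum.inl (Sum.inr e)))) (PolyFun.add ?_ ?_)
  · exact PolyFun.sum _ fun l => (PolyFun.coord (Sum.inl (Sum.inr l))).mul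
      (PolyFun.coord (Sum.inl (Sum.inl (Sum.inl (Sum.inr (l, e))))))
  · exact PolyFun.sum _ fun q => (PolyFun.coord (Sum.inr q)).mul
      (PolyFun.coeffJgen (fun e => (hc e).weak.weak.weak.weak)
        (fun i => (hp i).weak.weak.weak.weak) _ _ _)

theorem coeff_toPoly (c : CoeffIdx n d → ℂ) (e : CoeffIdx n d) :
    coeff (Finsupp.equivFunOnFinite.symm e.1) (toPoly c) = c e := by
  classical
  unfold toPoly
  simp only [coeff_sum, coeff_smul, coeff_monomial, EmbeddingLike.apply_eq_iff_eq,
    Subtype.coe_inj]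
  simp

theorem totalDegree_toPoly_le (c : CoeffIdx n d → ℂ) : (toPoly c).totalDegree ≤ d := by
  unfold toPoly
  refine totalDegree_finsetSum_le fun e _ => (totalDegree_smul_le _ _).trans ?_
  refine (totalDegree_monomial_le _ _).trans ?_
  rw [Finsupp.sum_fintype _ _ (fun _ => rfl)]
  exact e.2

theorem totalDegree_char (c : CoeffIdx n d → ℂ) : (toPoly c).totalDegree = d ↔
    d = 0 ∨ ∃ e : {e : CoeffIdx n d // ∑ i, e.1 i = d}, ¬ (c e.1 = 0) := by
  have hle := totalDegree_toPoly_le c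
  constructor
  · intro h
    rcases Nat.eq_zero_or_pos d with h0 | h0
    · exact Or.inl h0
    right
    have hne : (toPoly c).support.Nonempty := by
      rw [Finset.nonempty_iff_ne_empty, Ne, support_eq_empty]
      intro h1
      rw [h1, totalDegree_zero] at h
      omega
    obtain ⟨b, hb, hb2⟩ := Finset.exists_mem_eq_sup _ hne
      (fun s : Fin n →₀ ℕ => s.sum fun _ e => e)
    have hbd : ∑ i, b i = d := by
      rw [← h, totalDegree, hb2, Finsupp.sum_fintype _ _ (fun _ => rfl)]
    refine ⟨⟨⟨b, hbd.le⟩, hbd⟩, ?_⟩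
    rw [← coeff_toPoly c]
    rw [mem_support_iff] at hb
    have hbb : Finsupp.equivFunOnFinite.symm (b : Fin n → ℕ) = b := by ext; rfl
    change ¬ coeff (Finsupp.equivFunOnFinite.symm (b : Fin n → ℕ)) (toPoly c) = 0
    rw [hbb]
    exact hb
  · rintro (h | ⟨e, he⟩)
    · omega
    · refine le_antisymm hle ?_
      have := le_totalDegree (p := toPoly c) (s := Finsupp.equivFunOnFinite.symm e.1.1)
        (mem_support_iff.2 (by rwa [coeff_toPoly]))
      rw [Finsupp.sum_fintype _ _ (fun _ => rfl)] at this
      exact e.2.symm.le.trans this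

theorem Cons.all (n d m k : ℕ) : Cons (fun c : CoeffIdx n d → ℂ =>
      (toPoly c).totalDegree = d ∧
      (AffSing (toPoly c)).Finite ∧
      mu (toPoly c) = m ∧
      (Baff (toPoly c)).ncard = k) := by
  have h1 : Cons (fun c : CoeffIdx n d → ℂ => (toPoly c).totalDegree = d) := by
    simp only [totalDegree_char]
    exact (Cons.const _).or (Cons.finEx fun e => (Cons.eqZero (PolyFun.coord _)).not)
  have h2 : Cons (fun c : CoeffIdx n d → ℂ => (AffSing (toPoly c)).Finite ∧
      mu (toPoly c) = m) := by
    simp only [mu_char]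
    refine Cons.finEx fun r => Cons.exists (Cons.and ?_ (Cons.and ?_ ?_))
    · refine Cons.finAll fun t => Cons.finAll fun t' => Cons.imp ?_ (Cons.const _)
      exact Cons.finAll fun i => Cons.eq (PolyFun.coord _) (PolyFun.coord _)
    · refine Cons.forall (Cons.iff ?_ ?_)
      · exact Cons.finAll fun i => Cons.eqZero (PolyFun.evalPderiv
          (fun e => PolyFun.coord (Sum.inl (Sum.inl e))) (fun i => PolyFun.coord (Sum.inr i)) i)
      · exact Cons.finEx fun t => Cons.finAll fun i =>
          Cons.eq (PolyFun.coord _) (PolyFun.coord (Sum.inl (Sum.inr (t, i))))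
    · refine Cons.finEx fun jj => (Cons.const _).and (Cons.finAll fun t => Cons.and ?_
        (Cons.finAll fun j' => Cons.not ?_))
      · exact Cons.muLe (fun e => PolyFun.coord (Sum.inl e))
          (fun i => PolyFun.coord (Sum.inr (t, i))) _
      · exact Cons.muLe (fun e => PolyFun.coord (Sum.inl e))
          (fun i => PolyFun.coord (Sum.inr (t, i))) _
  have h3 : Cons (fun c : CoeffIdx n d → ℂ => ∃ t : Fin k → ℂ, (∀ a b, t a = t b → a = b) ∧
      ∀ s : Unit → ℂ, (∃ x : Fin n → ℂ, (∀ i, eval x (pderiv i (toPoly c)) = 0) ∧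
        eval x (toPoly c) = s ()) ↔ ∃ a, s () = t a) := by
    refine Cons.exists (Cons.and ?_ (Cons.forall (Cons.iff (Cons.exists (Cons.and ?_ ?_)) ?_)))
    · exact Cons.finAll fun a => Cons.finAll fun b =>
        (Cons.eq (PolyFun.coord _) (PolyFun.coord _)).imp (Cons.const _)
    · exact Cons.finAll fun i => Cons.eqZero (PolyFun.evalPderiv
        (fun e => PolyFun.coord (Sum.inl (Sum.inl (Sum.inl e))))
        (fun i => PolyFun.coord (Sum.inr i)) i)
    · exact Cons.eq (PolyFun.evalToPoly
        (fun e => PolyFun.coord (Sum.inl (Sum.inl (Sum.inl e))))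
        (fun i => PolyFun.coord (Sum.inr i))) (PolyFun.coord _)
    · exact Cons.finEx fun a => Cons.eq (PolyFun.coord _) (PolyFun.coord _)
  refine (h1.and (h2.and h3)).congr fun c => and_congr_right fun _ => ?_
  rw [← and_assoc]
  exact and_congr_right fun h => Baff_char _ h.1 k

end

end PolyTop

namespace PolyTop

/-- after Broughton. For fixed `n, d, m, k`, the set of polynomials of
degree exactly `d` in `n` variables, with isolated affine singularities, total Milnor
number `μ(f) = m` and `#B_aff(f) = k`, is a constructible subset of the coefficient
space `ℂ^N` of polynomials of degree at most `d`. -/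
theorem constructible_mu_Baff (n d m k : ℕ) :
    IsConstructibleC {c : CoeffIdx n d → ℂ |
      (toPoly c).totalDegree = d ∧
      (AffSing (toPoly c)).Finite ∧
      mu (toPoly c) = m ∧
      (Baff (toPoly c)).ncard = k} := by
  exact (Cons.all n d m k).isConstructibleC

end PolyTop
end
end

section
/- Let f ∈ ℂ[x₁,…,xₙ] have degree d ≥ 1, with homogenisation P̃ by x₀, and let X = {([x:x₀],t) ∈ ℙⁿ × ℂ : P̃(x,x₀) − t x₀^d = 0}. Then the singular locus of the hypersurface X is exactly Σ(f) × ℂ = {([p:0],t) : [p] ∈ Σ(f), t ∈ ℂ}; in particular X is smooth at every point of its affine part {x₀ ≠ 0}, and Sing X is contained in the hyperplane at infinity {x₀ = 0}. -/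
/- Common definitions: singularity-theoretic invariants of complex polynomials,
following Bodin–Tibăr, "Topological equivalence of complex polynomials". -/

open MvPolynomial Set

noncomputable section

namespace PolyTop

lemma eval_chartPoly {k : ℕ} (j : Fin (k + 1)) (F : MvPolynomial (Fin (k + 1)) ℂ)
    (c : Fin k → ℂ) :
    eval c (chartPoly j F) = eval (j.insertNth (α := fun _ => ℂ) 1 c) F := by
  unfold chartPoly
  induction F using MvPolynomial.induction_on with
  | C a => simp
  | add p q hp hq => simp only [map_add, hp, hq]
  | mul_X p i hp =>
    simp only [map_mul, hp, aeval_X, eval_X]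
    congr 1
    induction i using Fin.succAboveCases j <;> simp

lemma pderiv_chartPoly {k : ℕ} (j : Fin (k + 1)) (F : MvPolynomial (Fin (k + 1)) ℂ)
    (i : Fin k) :
    pderiv i (chartPoly j F) = chartPoly j (pderiv (j.succAbove i) F) := by
  classical
  unfold chartPoly
  induction F using MvPolynomial.induction_on with
  | C a => simp [← algebraMap_eq]
  | add p q hp hq => simp only [map_add, hp, hq]
  | mul_X p l hp =>
    simp only [map_mul, aeval_X, pderiv_mul, hp, map_add]
    congr 2
    induction l using Fin.succAboveCases j with
    | x => simp [pderiv_X_of_ne (Fin.ne_succAbove j i)]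
    | p l =>
      simp only [Fin.insertNth_apply_succAbove]
      by_cases h : l = i
      · subst h; simp
      · rw [pderiv_X_of_ne h, pderiv_X_of_ne (by simpa using h)]; simp

lemma eval_smul_homog {m k : ℕ} {p : MvPolynomial (Fin m) ℂ} (hp : p.IsHomogeneous k)
    (c : ℂ) (u : Fin m → ℂ) : eval (c • u) p = c ^ k * eval u p := by
  rw [eval_eq, eval_eq, Finset.mul_sum]
  refine Finset.sum_congr rfl fun e he => ?_
  have h : ∑ i ∈ e.support, e i = k := by
    have := hp (mem_support_iff.mp he)
    rwa [Finsupp.weight_apply, Finsupp.sum, Finset.sum_congr rfl] at this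
    intro i _; simp
  simp only [Pi.smul_apply, smul_eq_mul, mul_pow, Finset.prod_mul_distrib,
    Finset.prod_pow_eq_pow_sum, h]
  ring

def SigCond {n : ℕ} (f : MvPolynomial (Fin n) ℂ) (u : Fin n → ℂ) : Prop :=
  (∀ i, eval u (pderiv i (homogeneousComponent f.totalDegree f)) = 0) ∧
    eval u (homogeneousComponent (f.totalDegree - 1) f) = 0

lemma sigCond_smul {n : ℕ} (f : MvPolynomial (Fin n) ℂ) (u : Fin n → ℂ) {c : ℂ}
    (hc : c ≠ 0) : SigCond f (c • u) ↔ SigCond f u := by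
  unfold SigCond
  simp only [eval_smul_homog (homogeneousComponent_isHomogeneous _ _),
    eval_smul_homog ((homogeneousComponent_isHomogeneous _ _).pderiv), mul_eq_zero,
    pow_eq_zero_iff', hc, false_and, false_or, ne_eq]

lemma eval_rename_succ {n : ℕ} (p : MvPolynomial (Fin n) ℂ) (w : Fin (n + 1) → ℂ) :
    eval w (rename Fin.succ p) = eval (Fin.tail w) p := by
  rw [eval_rename]; rfl

lemma pderiv_zero_rename_succ {n : ℕ} (p : MvPolynomial (Fin n) ℂ) :
    pderiv 0 (rename Fin.succ p) = 0 := by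
  classical
  apply pderiv_eq_zero_of_notMem_vars
  intro h
  have := vars_rename Fin.succ p h
  simp [Fin.succ_ne_zero] at this

lemma pderiv_last_rename {n : ℕ} (p : MvPolynomial (Fin n) ℂ) :
    pderiv (Fin.last n) (rename Fin.castSucc p) = 0 := by
  classical
  apply pderiv_eq_zero_of_notMem_vars
  intro h
  have := vars_rename Fin.castSucc p h
  simp [Fin.castSucc_ne_last] at this

lemma eval_homog {n : ℕ} (f : MvPolynomial (Fin n) ℂ) (w : Fin (n + 1) → ℂ) (h0 : w 0 = 0) :
    eval w (homog f) = eval (Fin.tail w) (homogeneousComponent f.totalDegree f) := by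
  unfold homog
  rw [map_sum, Finset.sum_eq_single f.totalDegree]
  · simp [eval_rename_succ]
  · intro k hk hk'
    have : f.totalDegree - k ≠ 0 := by simp at hk; omega
    simp [h0, this]
  · simp

lemma eval_pderiv_succ_homog {n : ℕ} (f : MvPolynomial (Fin n) ℂ) (w : Fin (n + 1) → ℂ)
    (h0 : w 0 = 0) (i : Fin n) :
    eval w (pderiv i.succ (homog f)) =
      eval (Fin.tail w) (pderiv i (homogeneousComponent f.totalDegree f)) := by
  unfold homog
  rw [map_sum, map_sum, Finset.sum_eq_single f.totalDegree]
  · simp [eval_rename_succ, pderiv_rename (Fin.succ_injective n)]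
  · intro k hk hk'
    have : f.totalDegree - k ≠ 0 := by simp at hk; omega
    simp [h0, this, pderiv_mul, pderiv_pow, pderiv_X_of_ne (Fin.succ_ne_zero i).symm]
  · simp

lemma eval_pderiv_zero_homog {n : ℕ} (f : MvPolynomial (Fin n) ℂ) (w : Fin (n + 1) → ℂ)
    (h0 : w 0 = 0) (hd : 1 ≤ f.totalDegree) :
    eval w (pderiv 0 (homog f)) =
      eval (Fin.tail w) (homogeneousComponent (f.totalDegree - 1) f) := by
  unfold homog
  rw [map_sum, map_sum, Finset.sum_eq_single (f.totalDegree - 1)]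
  · have : f.totalDegree - (f.totalDegree - 1) = 1 := by omega
    simp [this, eval_rename_succ, pderiv_mul, pderiv_zero_rename_succ]
  · intro k hk hk'
    simp only [Finset.mem_range] at hk
    rcases Nat.lt_or_ge k f.totalDegree with h | h
    · have : f.totalDegree - k - 1 ≠ 0 := by omega
      simp [h0, this, pderiv_mul, pderiv_pow, pderiv_zero_rename_succ]
    · have : f.totalDegree - k = 0 := by omega
      simp [this, pderiv_zero_rename_succ]
  · intro h; simp at h

lemma topComp_ne_zero {n : ℕ} (f : MvPolynomial (Fin n) ℂ) (hd : 1 ≤ f.totalDegree) :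
    homogeneousComponent f.totalDegree f ≠ 0 := by
  intro h
  have hlt : f.totalDegree < f.totalDegree := by
    conv_lhs => rw [← sum_homogeneousComponent f]
    rw [Finset.sum_range_succ, h, add_zero]
    refine lt_of_le_of_lt (totalDegree_finsetSum_le (d := f.totalDegree - 1) ?_) (by omega)
    intro k hk
    have := (homogeneousComponent_isHomogeneous k f).totalDegree_le
    simp at hk; omega
  exact lt_irrefl _ hlt

/-- When `d = 1`, the gradient of the top part does not vanish. -/
lemma two_le_of_grad {n : ℕ} (f : MvPolynomial (Fin n) ℂ) (hd : 1 ≤ f.totalDegree)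
    (u : Fin n → ℂ)
    (hu : ∀ i, eval u (pderiv i (homogeneousComponent f.totalDegree f)) = 0) :
    2 ≤ f.totalDegree := by
  by_contra hlt
  have h1 : f.totalDegree = 1 := by omega
  have hH := homogeneousComponent_isHomogeneous f.totalDegree f
  apply topComp_ne_zero f hd
  have hE := hH.sum_X_mul_pderiv
  have hz : ∀ i, pderiv i (homogeneousComponent f.totalDegree f) = 0 := by
    intro i
    have h0 := hH.pderiv (i := i)
    rw [show f.totalDegree - 1 = 0 by omega] at h0
    have hc := totalDegree_eq_zero_iff_eq_C.mp (Nat.le_zero.mp h0.totalDegree_le)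
    have := hu i
    rw [hc, eval_C] at this
    rw [hc, this, C_0]
  rw [h1, one_smul] at hE
  rw [h1] at hz ⊢
  rw [← hE]
  simp [hz]

/-- The singularity condition in homogeneous coordinates normalised at `j`. -/
lemma sing_iff {n : ℕ} (f : MvPolynomial (Fin n) ℂ) (hd : 1 ≤ f.totalDegree)
    (j : Fin (n + 1)) (c : Fin n → ℂ) (t : ℂ) (w : Fin (n + 1) → ℂ)
    (hw : w = j.insertNth (α := fun _ => ℂ) 1 c) :
    (eval (Fin.snoc (α := fun _ => ℂ) c t) (XXchartEq f j) = 0 ∧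
      ∀ i, eval (Fin.snoc (α := fun _ => ℂ) c t) (pderiv i (XXchartEq f j)) = 0) ↔
    (w 0 = 0 ∧ SigCond f (Fin.tail w)) := by
  have hs : (Fin.snoc (α := fun _ => ℂ) c t) ∘ Fin.castSucc = c := by
    funext i; simp
  have hwj : w j = 1 := by simp [hw]
  have hd0 : f.totalDegree ≠ 0 := by omega
  have e1 : eval (Fin.snoc (α := fun _ => ℂ) c t) (XXchartEq f j) =
      eval w (homog f) - t * w 0 ^ f.totalDegree := by
    simp [XXchartEq, eval_rename, hs, eval_chartPoly, ← hw]
  have e2 : eval (Fin.snoc (α := fun _ => ℂ) c t) (pderiv (Fin.last n) (XXchartEq f j)) =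
      - w 0 ^ f.totalDegree := by
    simp only [XXchartEq, map_sub, pderiv_mul, pderiv_last_rename, map_add, map_mul,
      pderiv_X_self, eval_rename, hs, eval_chartPoly, ← hw]
    simp
  have e3 : ∀ i : Fin n, eval (Fin.snoc (α := fun _ => ℂ) c t)
      (pderiv i.castSucc (XXchartEq f j)) =
      eval w (pderiv (j.succAbove i) (homog f)) -
        t * eval w (pderiv (j.succAbove i) (X 0 ^ f.totalDegree)) := by
    intro i
    simp only [XXchartEq, map_sub, pderiv_mul, pderiv_rename (Fin.castSucc_injective n),
      map_add, map_mul, pderiv_chartPoly,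
      pderiv_X_of_ne (Fin.castSucc_ne_last i).symm, eval_rename, hs, eval_chartPoly, ← hw]
    simp
  rw [Fin.forall_fin_succ', e1, e2]
  simp only [e3]
  have hH := homogeneousComponent_isHomogeneous f.totalDegree f
  have hEu : ∑ i, w i.succ *
      eval (Fin.tail w) (pderiv i (homogeneousComponent f.totalDegree f)) =
      f.totalDegree * eval (Fin.tail w) (homogeneousComponent f.totalDegree f) := by
    have := congrArg (eval (Fin.tail w)) hH.sum_X_mul_pderiv
    simpa [Fin.tail] using this
  have hXs : ∀ i : Fin n, eval w (pderiv i.succ (X 0 ^ f.totalDegree)) = 0 := by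
    intro i
    simp [pderiv_pow, pderiv_X_of_ne (Fin.succ_ne_zero i).symm]
  have hX0 : w 0 = 0 → 2 ≤ f.totalDegree →
      eval w (pderiv 0 (X 0 ^ f.totalDegree)) = 0 := by
    intro h0 h2
    have : f.totalDegree - 1 ≠ 0 := by omega
    simp [pderiv_pow, h0, this]
  constructor
  · rintro ⟨hv, hp, ht⟩
    have h0 : w 0 = 0 := by simpa [hd0] using ht
    have hj : j ≠ 0 := by rintro rfl; simp [h0] at hwj
    have hp' : ∀ l, l ≠ j → eval w (pderiv l (homog f)) -
        t * eval w (pderiv l (X 0 ^ f.totalDegree)) = 0 := by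
      intro l hl
      obtain ⟨i, rfl⟩ := Fin.exists_succAbove_eq hl
      exact hp i
    obtain ⟨k, rfl⟩ := Fin.exists_succ_eq.mpr hj
    have hv' : eval (Fin.tail w) (homogeneousComponent f.totalDegree f) = 0 := by
      rw [eval_homog f w h0] at hv
      simpa [h0, hd0] using hv
    have hne : ∀ i, i ≠ k →
        eval (Fin.tail w) (pderiv i (homogeneousComponent f.totalDegree f)) = 0 := by
      intro i hi
      have := hp' i.succ (by simpa using hi)
      rwa [hXs, mul_zero, sub_zero, eval_pderiv_succ_homog f w h0] at this
    have hall : ∀ i,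
        eval (Fin.tail w) (pderiv i (homogeneousComponent f.totalDegree f)) = 0 := by
      intro i
      by_cases hi : i = k
      · subst hi
        rw [hv', mul_zero, Finset.sum_eq_single i] at hEu
        · simpa [hwj] using hEu
        · intro b _ hb; rw [hne b hb, mul_zero]
        · simp
      · exact hne i hi
    refine ⟨h0, hall, ?_⟩
    have := hp' 0 (Fin.succ_ne_zero k).symm
    rwa [hX0 h0 (two_le_of_grad f hd _ hall), mul_zero, sub_zero,
      eval_pderiv_zero_homog f w h0 hd] at this
  · rintro ⟨h0, hall, hb⟩
    have h2 := two_le_of_grad f hd _ hall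
    have hv' : eval (Fin.tail w) (homogeneousComponent f.totalDegree f) = 0 := by
      simp only [hall, mul_zero, Finset.sum_const_zero] at hEu
      simpa [hd0] using hEu.symm
    refine ⟨?_, fun i => ?_, ?_⟩
    · rw [eval_homog f w h0, hv', h0]; simp [hd0]
    · generalize j.succAbove i = l
      induction l using Fin.cases with
      | zero => rw [hX0 h0 h2, eval_pderiv_zero_homog f w h0 hd, hb]; simp
      | succ l => rw [hXs, eval_pderiv_succ_homog f w h0, hall]; simp
    · simp [h0, hd0]

lemma mem_SingXX_iff {n : ℕ} (f : MvPolynomial (Fin n) ℂ) (hd : 1 ≤ f.totalDegree)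
    (z : Proj (n + 1) × ℂ) :
    z ∈ SingXX f ↔ (z.1.rep 0 = 0 ∧ SigCond f (Fin.tail z.1.rep)) := by
  have hpv : z.1.rep (pivot z.1) ≠ 0 :=
    (Function.ne_iff.mp z.1.rep_nonzero).choose_spec
  have hinv := inv_ne_zero hpv
  have hw : (z.1.rep (pivot z.1))⁻¹ • z.1.rep =
      (pivot z.1).insertNth (α := fun _ => ℂ) 1 (chartPoint (pivot z.1) z.1.rep) := by
    funext i
    induction i using Fin.succAboveCases (pivot z.1) with
    | x => simp [hpv]
    | p l => simp [chartPoint, div_eq_inv_mul]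
  have ht : Fin.tail ((z.1.rep (pivot z.1))⁻¹ • z.1.rep) =
      (z.1.rep (pivot z.1))⁻¹ • Fin.tail z.1.rep := rfl
  have := sing_iff f hd (pivot z.1) (chartPoint (pivot z.1) z.1.rep) z.2 _ hw
  rw [ht, sigCond_smul f _ hinv] at this
  refine Iff.trans this ?_
  simp [hpv]

/-- §2. Let `f` have degree `d ≥ 1`, with homogenisation `P̃`, and let
`X = {P̃(x,x₀) - t x₀^d = 0} ⊂ ℙ^n × ℂ`. Then the singular locus of the hypersurface `X`
is exactly `Σ(f) × ℂ`; in particular `X` is smooth at every point of its affine part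
`{x₀ ≠ 0}` and `Sing X` is contained in the hyperplane at infinity `{x₀ = 0}`. -/
theorem singular_locus_of_X (n d : ℕ) (hd : 1 ≤ d)
    (f : MvPolynomial (Fin n) ℂ) (hdeg : f.totalDegree = d) :
    SingXX f = {z : Proj (n + 1) × ℂ |
      ∃ (P : Proj n) (t : ℂ), P ∈ SigmaSet f ∧ z = (projEmbInf P, t)} ∧
    ∀ z ∈ SingXX f, z.1.rep 0 = 0 := by
  subst hdeg
  refine ⟨?_, fun z hz => ((mem_SingXX_iff f hd z).mp hz).1⟩
  ext z
  rw [mem_SingXX_iff f hd z]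
  constructor
  · rintro ⟨h0, hS⟩
    have hne : Fin.tail z.1.rep ≠ 0 := by
      intro h
      apply z.1.rep_nonzero
      funext i
      induction i using Fin.cases with
      | zero => exact h0
      | succ i => exact congrFun h i
    obtain ⟨a, ha⟩ := Projectivization.exists_smul_eq_mk_rep ℂ _ hne
    refine ⟨Projectivization.mk ℂ _ hne, z.2, ?_, ?_⟩
    · change SigCond f (Projectivization.mk ℂ _ hne).rep
      rw [← ha]
      exact (sigCond_smul f _ a.ne_zero).mpr hS
    · refine Prod.ext ?_ rfl
      change z.1 = projEmbInf _
      conv_lhs => rw [← z.1.mk_rep]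
      unfold projEmbInf
      rw [Projectivization.mk_eq_mk_iff]
      refine ⟨a⁻¹, ?_⟩
      rw [inv_smul_eq_iff]
      funext i
      induction i using Fin.cases with
      | zero => simp [h0, Units.smul_def]
      | succ i => exact (congrFun ha i).symm
  · rintro ⟨P, t, hP, rfl⟩
    change SigCond f P.rep at hP
    have hne : (Fin.cons 0 P.rep : Fin (n + 1) → ℂ) ≠ 0 := by
      intro h
      apply P.rep_nonzero
      funext i
      simpa using congrFun h i.succ
    obtain ⟨a, ha⟩ := Projectivization.exists_smul_eq_mk_rep ℂ _ hne
    change (Projectivization.mk ℂ _ hne).rep 0 = 0 ∧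
      SigCond f (Fin.tail (Projectivization.mk ℂ _ hne).rep)
    rw [← ha]
    refine ⟨by simp [Units.smul_def], ?_⟩
    exact (sigCond_smul f _ a.ne_zero).mpr hP

end PolyTop
end
end

section
/- For every s ∈ ℂ ∖ {−2, −1}, the polynomial f_s(x,y,z,w) = x²y² + z² + w² + xy + (1+s)x² + x has finite singular locus and total Milnor number μ(f_s) = 2; that is, the quotient ring ℂ[x,y,z,w]/(∂f_s/∂x, ∂f_s/∂y, ∂f_s/∂z, ∂f_s/∂w) is a ℂ-vector space of dimension 2. -/
/- Common definitions: singularity-theoretic invariants of complex polynomials,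
following Bodin–Tibăr, "Topological equivalence of complex polynomials". -/

open MvPolynomial Set

noncomputable section

namespace PolyTop

/-- Example 2.2. For every `s ∈ ℂ ∖ {-2,-1}`, the polynomial
`f_s(x,y,z,w) = x²y² + z² + w² + xy + (1+s)x² + x` has finite singular locus and total
Milnor number `μ(f_s) = 2`: the quotient of `ℂ[x,y,z,w]` by the ideal of the partial
derivatives of `f_s` is a `ℂ`-vector space of dimension `2`. -/
theorem example_total_milnor_number (s : ℂ) (hs2 : s ≠ -2) (hs1 : s ≠ -1)
    (f : MvPolynomial (Fin 4) ℂ)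
    (hf : f = X 0 ^ 2 * X 1 ^ 2 + X 2 ^ 2 + X 3 ^ 2 + X 0 * X 1 +
      C (1 + s) * X 0 ^ 2 + X 0) :
    (AffSing f).Finite ∧
    Module.finrank ℂ
      (MvPolynomial (Fin 4) ℂ ⧸ Ideal.span (Set.range fun i : Fin 4 => pderiv i f))
      = 2 := by
  have ha : (1 + s) ≠ 0 := by
    intro h; apply hs1; linear_combination h
  obtain ⟨a, rfl⟩ : ∃ a, s = a - 1 := ⟨s + 1, by ring⟩
  have ha : a ≠ 0 := by
    intro h; apply ha; rw [h]; ring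
  rw [show 1 + (a - 1) = a by ring] at hf
  obtain ⟨u, hu⟩ : ∃ u : ℂ, 2 * a * u = 1 := ⟨(2 * a)⁻¹, by field_simp⟩
  have h0 : pderiv 0 f = 2 * X 0 * X 1 ^ 2 + X 1 + 2 * C a * X 0 + 1 := by
    rw [hf]; simp [pderiv_X, Pi.single_apply]; ring
  have h1 : pderiv 1 f = 2 * X 0 ^ 2 * X 1 + X 0 := by
    rw [hf]; simp [pderiv_X, Pi.single_apply]; ring
  have h2 : pderiv 2 f = 2 * X 2 := by
    rw [hf]; simp [pderiv_X, Pi.single_apply]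
  have h3 : pderiv 3 f = 2 * X 3 := by
    rw [hf]; simp [pderiv_X, Pi.single_apply]
  constructor
  · apply Set.Finite.subset (Set.toFinite {![0, -1, 0, 0], ![-u, a, 0, 0]})
    intro p hp
    have e0 := hp 0
    have e1 := hp 1
    have e2 := hp 2
    have e3 := hp 3
    rw [h0] at e0
    rw [h1] at e1
    rw [h2] at e2
    rw [h3] at e3
    simp at e0 e1 e2 e3
    have e1' : p 0 * (2 * p 0 * p 1 + 1) = 0 := by linear_combination e1
    rcases mul_eq_zero.mp e1' with h | h
    · left
      have : p 1 = -1 := by rw [h] at e0; linear_combination e0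
      funext i; fin_cases i <;> simp [*]
    · right
      have k0 : p 0 = -u := by linear_combination u * e0 - u * p 1 * h - p 0 * hu
      have k1 : p 1 = a := by
        rw [k0] at h
        linear_combination (-a) * h - (p 1) * hu
      simp only [Set.mem_singleton_iff]
      funext i; fin_cases i <;> simp [*]
  · set I := Ideal.span (Set.range fun i : Fin 4 => pderiv i f) with hI
    let π : MvPolynomial (Fin 4) ℂ →ₐ[ℂ] (MvPolynomial (Fin 4) ℂ ⧸ I) := Ideal.Quotient.mkₐ ℂ I
    have hπ : ∀ i, π (pderiv i f) = 0 := fun i =>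
      Ideal.Quotient.eq_zero_iff_mem.mpr (Ideal.subset_span ⟨i, rfl⟩)
    have hC : ∀ c, π (C c) = algebraMap ℂ _ c := fun c => π.commutes c
    have r0 := hπ 0
    have r1 := hπ 1
    have r2 := hπ 2
    have r3 := hπ 3
    rw [h0] at r0
    rw [h1] at r1
    rw [h2] at r2
    rw [h3] at r3
    simp only [map_add, map_mul, map_pow, map_one, map_ofNat, hC] at r0 r1 r2 r3
    have hu' : 2 * algebraMap ℂ (MvPolynomial (Fin 4) ℂ ⧸ I) a * algebraMap ℂ _ u = 1 := by
      have := congrArg (algebraMap ℂ (MvPolynomial (Fin 4) ℂ ⧸ I)) hu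
      simpa only [map_mul, map_one, map_ofNat] using this
    have h2' : 2 * algebraMap ℂ (MvPolynomial (Fin 4) ℂ ⧸ I) 2⁻¹ = 1 := by
      have := congrArg (algebraMap ℂ (MvPolynomial (Fin 4) ℂ ⧸ I))
        (show (2:ℂ) * 2⁻¹ = 1 by norm_num)
      simpa only [map_mul, map_one, map_ofNat] using this
    have q0 : π (X 0) * π (X 0) = - algebraMap ℂ _ u * π (X 0) := by
      linear_combination algebraMap ℂ _ u * (π (X 0) * r0 - π (X 1) * r1) - π (X 0) ^ 2 * hu'
    have q1 : π (X 0) * π (X 1) = algebraMap ℂ _ a * π (X 0) := by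
      linear_combination 2 * algebraMap ℂ _ a * π (X 1) * q0 - algebraMap ℂ _ a * r1
        - π (X 0) * π (X 1) * hu'
    have q2 : π (X 1) = - 1 - (2 * algebraMap ℂ _ a ^ 2 + 2 * algebraMap ℂ _ a) * π (X 0) := by
      linear_combination r0 - 2 * (π (X 1) + algebraMap ℂ _ a) * q1
    have q3 : π (X 2) = 0 := by
      linear_combination algebraMap ℂ _ 2⁻¹ * r2 - π (X 2) * h2'
    have q4 : π (X 3) = 0 := by
      linear_combination algebraMap ℂ _ 2⁻¹ * r3 - π (X 3) * h2'
    have key : ∀ g, ∃ c d : ℂ, π g = π (C c + C d * X 0) := by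
      intro g
      simp only [map_add, map_mul, hC]
      induction g using MvPolynomial.induction_on with
      | C c => exact ⟨c, 0, by simp [hC]⟩
      | add p q hp hq =>
        obtain ⟨c, d, h⟩ := hp
        obtain ⟨c', d', h'⟩ := hq
        refine ⟨c + c', d + d', ?_⟩
        simp only [map_add, h, h']; ring
      | mul_X p i hp =>
        obtain ⟨c, d, h⟩ := hp
        rw [map_mul, h]
        obtain rfl | rfl | rfl | rfl : i = 0 ∨ i = 1 ∨ i = 2 ∨ i = 3 := by
          fin_cases i <;> simp
        · refine ⟨0, c - d * u, ?_⟩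
          simp only [map_sub, map_mul, map_zero]
          linear_combination algebraMap ℂ _ d * q0
        · refine ⟨-c, d * a - c * (2 * a ^ 2 + 2 * a), ?_⟩
          simp only [map_sub, map_mul, map_neg, map_add, map_pow, map_ofNat]
          linear_combination algebraMap ℂ _ d * q1 + algebraMap ℂ _ c * q2
        · refine ⟨0, 0, ?_⟩
          simp only [map_zero]
          linear_combination (algebraMap ℂ _ c + algebraMap ℂ _ d * π (X 0)) * q3
        · refine ⟨0, 0, ?_⟩
          simp only [map_zero]
          linear_combination (algebraMap ℂ _ c + algebraMap ℂ _ d * π (X 0)) * q4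
    let φ : MvPolynomial (Fin 4) ℂ →ₐ[ℂ] (ℂ × ℂ) :=
      (aeval ![0, -1, 0, 0]).prod (aeval ![-u, a, 0, 0])
    have hu0 : u ≠ 0 := by rintro rfl; simp at hu
    have hlin : ∀ c d : ℂ, φ (C c + C d * X 0) = (c, c - d * u) := by
      intro c d
      simp [φ, sub_eq_add_neg]
    have hsurj : Function.Surjective φ := by
      rintro ⟨m, n⟩
      refine ⟨C m + C ((m - n) / u) * X 0, ?_⟩
      rw [hlin]; field_simp; simp
    have hle : I ≤ RingHom.ker φ := by
      rw [hI, Ideal.span_le]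
      rintro _ ⟨i, rfl⟩
      rw [SetLike.mem_coe, RingHom.mem_ker]
      fin_cases i
      · simp [h0, φ]
        linear_combination (-a - 1) * hu
      · simp [h1, φ]
        linear_combination u * hu
      · simp [h2, φ]
      · simp [h3, φ]
    have hker : I = RingHom.ker φ := by
      apply le_antisymm hle
      intro g hg
      obtain ⟨c, d, h⟩ := key g
      have hm : g - (C c + C d * X 0) ∈ I := Ideal.Quotient.eq.mp h
      have h5 := hle hm
      rw [RingHom.mem_ker] at hg h5
      rw [map_sub, hg, hlin] at h5
      simp only [Prod.ext_iff, Prod.fst_sub, Prod.snd_sub, Prod.fst_zero, Prod.snd_zero] at h5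
      have hc : c = 0 := by linear_combination -h5.1
      have hd : d = 0 := by
        have : d * u = 0 := by linear_combination h5.2 + hc
        exact (mul_eq_zero.mp this).resolve_right hu0
      simpa [hc, hd] using hm
    rw [hker]
    rw [(Ideal.quotientKerAlgEquivOfSurjective hsurj).toLinearEquiv.finrank_eq]
    simp


end PolyTop
end
end
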